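/- Fix an integer m ≥ 1. There exists a constant c > 0 depending only on m such that for every continuous function f : [0,1] → ℝ and every integer n ≥ 1, the bootstrap bias e_m = (I − B_n)^m f satisfies sup_{p∈[0,1]} |e_m(p)| ≤ c ( ω_φ^{2m}(f, 1/√n) + ‖f‖ n^{−m} ). -/

import Mathlib

/-- Bernstein operator: `B_m[g](p) = Σ_{k=0}^m C(m,k) p^k (1-p)^{m-k} g(k/m)`. -/
noncomputable def bernstein' (m : ℕ) (g : ℝ → ℝ) (p : ℝ) : ℝ :=
  ∑ k ∈ Finset.range (m + 1), (m.choose k : ℝ) * p ^ k * (1 - p) ^ (m - k) * g ((k : ℝ) / m)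

/-- Iterated bootstrap bias: `bootIter n f m = (I − B_n)^m f`. -/
noncomputable def bootIter (n : ℕ) (f : ℝ → ℝ) : ℕ → ℝ → ℝ
  | 0 => f
  | m + 1 => fun p => bootIter n f m p - bernstein' n (bootIter n f m) p

/-- `r`-th symmetric difference of `g` with step `h`, vanishing near the boundary of `[0,1]`. -/
noncomputable def ditzSymmDiff (r : ℕ) (h : ℝ) (g : ℝ → ℝ) (x : ℝ) : ℝ :=
  if x - r * h / 2 ∈ Set.Icc (0:ℝ) 1 ∧ x + r * h / 2 ∈ Set.Icc (0:ℝ) 1 then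
    ∑ k ∈ Finset.range (r + 1), (-1 : ℝ) ^ k * (r.choose k : ℝ) * g (x + r * h / 2 - k * h)
  else 0

/-- `r`-th Ditzian–Totik modulus of smoothness with weight `φ(x) = √(x(1-x))`. -/
noncomputable def dtMod (r : ℕ) (g : ℝ → ℝ) (t : ℝ) : ℝ :=
  sSup {y : ℝ | ∃ h x : ℝ, 0 < h ∧ h ≤ t ∧ x ∈ Set.Icc (0:ℝ) 1 ∧
    y = |ditzSymmDiff r (h * Real.sqrt (x * (1 - x))) g x|}

/-- Sup norm on `[0,1]`. -/
noncomputable def supAbsOn (g : ℝ → ℝ) : ℝ := sSup ((fun p => |g p|) '' Set.Icc (0:ℝ) 1)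

/-!
Whitney's inequality approximates `f`, on pairs of adjacent cells of the quadratic grid `(i / N)²`
with `N ≍ √n`, by polynomials `Pᵢ` of degree less than `2 m`, up to a multiple of
`ω = ω_φ^{2m}(f, 1/√n)`. Fix `x ≤ 1 / 2` in the cell `a`. The remainder `f - P_a` grows only
polynomially in the distance to `x` measured in binomial standard deviations, so the binomial
moments bound its bias by a multiple of `ω + ‖f‖ n⁻ᵐ`. The bias of `P_a` is found from its Taylor
expansion at `x`: the iterated bias of `(X - x)ʲ` is at most a multiple of
`n⁻ᵐ (x (1 - x) + 1 / n) ^ max (j - m) 1`, and the Taylor coefficients are compared, cell by cell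
along the grid, with those at the cell of `1 / 2`; against these weights the increments sum to a
multiple of `ω` because `∑_{l ≥ a} (a + 1)² / (l + 1)³` is bounded. The reflection `x ↦ 1 - x`
settles `x ≥ 1 / 2`.
-/

section BernsteinPolynomials

open Polynomial Finset

/-! ### The Bernstein operator on polynomials -/

/-- The Bernstein operator as an endomorphism of the space of real polynomials, so that the powers
of `1 - bernsteinMap n` are the iterated biases and those of `1 + bernsteinMap n` majorize them. -/
noncomputable def bernsteinMap (n : ℕ) : Module.End ℝ ℝ[X] :=
  ∑ k ∈ range (n + 1), (leval ((k : ℝ) / n)).smulRight (bernsteinPolynomial ℝ n k)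

/-- The `i`-th central moment of the binomial proportion of `n` trials, as a polynomial in the
success probability. -/
noncomputable def bernsteinCentralMoment (n i : ℕ) : ℝ[X] :=
  ∑ k ∈ range (n + 1), bernsteinPolynomial ℝ n k * (C ((k : ℝ) / n) - X) ^ i

/-- The variance of the binomial proportion of `n` trials, as a polynomial in the success
probability. -/
noncomputable def bernsteinVariance (n : ℕ) : ℝ[X] := C (1 / (n : ℝ)) * (X * (1 - X))

lemma bernsteinMap_apply (n : ℕ) (q : ℝ[X]) :
    bernsteinMap n q = ∑ k ∈ range (n + 1), q.eval ((k : ℝ) / n) • bernsteinPolynomial ℝ n k := by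
  simp [bernsteinMap, leval]

lemma eval_bernsteinPolynomial (n k : ℕ) (x : ℝ) :
    (bernsteinPolynomial ℝ n k).eval x = (n.choose k : ℝ) * x ^ k * (1 - x) ^ (n - k) := by
  simp [bernsteinPolynomial]

lemma eval_bernsteinMap (n : ℕ) (q : ℝ[X]) (x : ℝ) :
    (bernsteinMap n q).eval x = bernstein' n (fun y => q.eval y) x := by
  rw [bernsteinMap_apply, bernstein', eval_finsetSum]
  refine sum_congr rfl fun k _ => ?_
  rw [eval_smul, eval_bernsteinPolynomial, smul_eq_mul, mul_comm]

lemma X_mul_derivative_bernsteinPolynomial {n k : ℕ} (hk : k ≤ n) :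
    X * (1 - X) * derivative (bernsteinPolynomial ℝ n k) =
      (C (k : ℝ) - C (n : ℝ) * X) * bernsteinPolynomial ℝ n k := by
  obtain ⟨j, rfl⟩ := Nat.exists_eq_add_of_le hk
  have hX : X * derivative ((X : ℝ[X]) ^ k) = C (k : ℝ) * X ^ k := by
    rcases k with _ | k
    · simp
    · simp; ring
  have hY : (1 - X) * derivative ((1 - X : ℝ[X]) ^ j) = - C (j : ℝ) * (1 - X) ^ j := by
    rcases j with _ | j
    · simp
    · rw [derivative_pow]; simp; ring
  have hb : bernsteinPolynomial ℝ (k + j) k =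
      C (((k + j).choose k : ℕ) : ℝ) * (X ^ k * (1 - X) ^ j) := by
    simp [bernsteinPolynomial, mul_assoc]
  rw [hb, derivative_C_mul, derivative_mul]
  simp only [Nat.cast_add, C_add]
  linear_combination
    (C (((k + j).choose k : ℕ) : ℝ)) * ((1 - X) * (1 - X) ^ j * hX + X * X ^ k * hY)

lemma bernsteinCentralMoment_zero (n : ℕ) : bernsteinCentralMoment n 0 = 1 := by
  simp [bernsteinCentralMoment, bernsteinPolynomial.sum]

lemma bernsteinCentralMoment_succ {n : ℕ} (hn : 0 < n) (i : ℕ) :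
    bernsteinCentralMoment n (i + 1) = bernsteinVariance n *
      (derivative (bernsteinCentralMoment n i) + C (i : ℝ) * bernsteinCentralMoment n (i - 1)) := by
  simp only [bernsteinCentralMoment, derivative_sum, mul_sum, ← sum_add_distrib]
  refine sum_congr rfl fun k hk => ?_
  have hn0 : (n : ℝ) ≠ 0 := by positivity
  have hk0 : C (k : ℝ) = C (n : ℝ) * C ((k : ℝ) / n) := by rw [← C_mul]; congr 1; field_simp
  have hn1 : C (1 / (n : ℝ)) * C (n : ℝ) = 1 := by rw [← C_mul, one_div_mul_cancel hn0, C_1]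
  have hpow : derivative ((C ((k : ℝ) / n) - X : ℝ[X]) ^ i) =
      - (C (i : ℝ) * (C ((k : ℝ) / n) - X) ^ (i - 1)) := by
    rw [derivative_pow]; simp
  have hb : bernsteinVariance n * derivative (bernsteinPolynomial ℝ n k) =
      (C ((k : ℝ) / n) - X) * bernsteinPolynomial ℝ n k := by
    have := X_mul_derivative_bernsteinPolynomial (Nat.lt_succ_iff.mp (mem_range.mp hk))
    rw [hk0] at this
    rw [bernsteinVariance]
    linear_combination C (1 / (n : ℝ)) * this +
      (C ((k : ℝ) / n) - X) * bernsteinPolynomial ℝ n k * hn1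
  rw [derivative_mul, hpow]
  linear_combination -(C ((k : ℝ) / n) - X) ^ i * hb

lemma bernsteinCentralMoment_one {n : ℕ} (hn : 0 < n) : bernsteinCentralMoment n 1 = 0 := by
  rw [bernsteinCentralMoment_succ hn 0, bernsteinCentralMoment_zero]; simp

lemma bernsteinCentralMoment_two {n : ℕ} (hn : 0 < n) :
    bernsteinCentralMoment n 2 = bernsteinVariance n := by
  rw [bernsteinCentralMoment_succ hn 1, bernsteinCentralMoment_one hn, bernsteinCentralMoment_zero]
  simp

lemma natDegree_bernsteinVariance_le (n : ℕ) : (bernsteinVariance n).natDegree ≤ 2 :=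
  (natDegree_C_mul_le _ _).trans (by compute_degree)

lemma natDegree_bernsteinCentralMoment_le {n : ℕ} (hn : 0 < n) (i : ℕ) :
    (bernsteinCentralMoment n i).natDegree ≤ i := by
  induction i using Nat.strong_induction_on with
  | _ i ih =>
    rcases i with _ | _ | i
    · simp [bernsteinCentralMoment_zero]
    · simp [bernsteinCentralMoment_one hn]
    · rw [bernsteinCentralMoment_succ hn (i + 1), add_comm i, add_comm (1 + i)]
      refine natDegree_mul_le_of_le (natDegree_bernsteinVariance_le n)
        (natDegree_add_le_of_degree_le ?_ ?_) |>.trans (by omega : 2 + i ≤ _)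
      · have := ih (1 + i) (by omega)
        exact (natDegree_derivative_le _).trans (by omega)
      · exact (natDegree_C_mul_le _ _).trans ((ih _ (by omega)).trans (by omega))

lemma eval_eq_sum_hasseDeriv {q : ℝ[X]} {J : ℕ} (hJ : q.natDegree ≤ J) (x y : ℝ) :
    q.eval y = ∑ i ∈ range (J + 1), (hasseDeriv i q).eval x * (y - x) ^ i := by
  have h : q.eval y = (taylor x q).eval (y - x) := by rw [taylor_eval]; simp
  rw [h, eval_eq_sum_range' (n := J + 1) (by rw [natDegree_taylor]; omega)]
  simp [taylor_coeff]

lemma bernsteinMap_eq_sum_hasseDeriv (n : ℕ) {q : ℝ[X]} {J : ℕ} (hJ : q.natDegree ≤ J) :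
    bernsteinMap n q = ∑ i ∈ range (J + 1), bernsteinCentralMoment n i * hasseDeriv i q := by
  refine Polynomial.funext fun x => ?_
  rw [bernsteinMap_apply]
  simp only [bernsteinCentralMoment, eval_finsetSum, eval_smul, smul_eq_mul, eval_mul, sum_mul]
  rw [sum_comm]
  refine sum_congr rfl fun k _ => ?_
  rw [eval_eq_sum_hasseDeriv hJ x, sum_mul]
  refine sum_congr rfl fun i _ => ?_
  simp; ring

lemma natDegree_bernsteinMap_le {n : ℕ} (hn : 0 < n) (q : ℝ[X]) :
    (bernsteinMap n q).natDegree ≤ q.natDegree := by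
  rw [bernsteinMap_eq_sum_hasseDeriv n le_rfl]
  refine natDegree_sum_le_of_forall_le _ _ fun i hi => ?_
  have hcm := natDegree_bernsteinCentralMoment_le hn i
  have hhd := natDegree_hasseDeriv_le q i
  have hi' := mem_range.mp hi
  exact natDegree_mul_le.trans (by omega)

lemma sub_bernsteinMap_eq_sum_hasseDeriv {n : ℕ} (hn : 0 < n) {q : ℝ[X]} {J : ℕ}
    (hJ : q.natDegree ≤ J) :
    q - bernsteinMap n q =
      - ∑ i ∈ range J, bernsteinCentralMoment n (i + 2) * hasseDeriv (i + 2) q := by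
  rw [bernsteinMap_eq_sum_hasseDeriv n (Nat.le_succ_of_le hJ), sum_range_succ', sum_range_succ']
  simp [bernsteinCentralMoment_zero, bernsteinCentralMoment_one hn]

lemma natDegree_pow_apply_le {T : Module.End ℝ ℝ[X]} (hT : ∀ q, (T q).natDegree ≤ q.natDegree)
    (s : ℕ) (q : ℝ[X]) : ((T ^ s) q).natDegree ≤ q.natDegree := by
  induction s with
  | zero => simp
  | succ s ih =>
    rw [pow_succ', Module.End.mul_apply]
    exact (hT _).trans ih

lemma natDegree_one_sub_bernsteinMap_pow_le {n : ℕ} (hn : 0 < n) (s : ℕ) (q : ℝ[X]) :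
    (((1 - bernsteinMap n) ^ s : Module.End ℝ ℝ[X]) q).natDegree ≤ q.natDegree :=
  natDegree_pow_apply_le
    (fun p => (natDegree_sub_le _ _).trans (max_le le_rfl (natDegree_bernsteinMap_le hn p))) s q

lemma natDegree_one_add_bernsteinMap_pow_le {n : ℕ} (hn : 0 < n) (s : ℕ) (q : ℝ[X]) :
    (((1 + bernsteinMap n) ^ s : Module.End ℝ ℝ[X]) q).natDegree ≤ q.natDegree :=
  natDegree_pow_apply_le
    (fun p => (natDegree_add_le _ _).trans (max_le le_rfl (natDegree_bernsteinMap_le hn p))) s q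

/-! ### Weighted bounds on Taylor coefficients -/

/-- A family of polynomials whose Taylor coefficients of order `k` at the points `c i` are
bounded by a constant multiple of `σ i * ρ i ^ (w - k)`, with truncated subtraction: `w` counts
powers of the scale `ρ`, and a Taylor coefficient of order `k` may lose at most `k` of them. -/
def TaylorBdd {ι : Type*} (c ρ σ : ι → ℝ) (w : ℕ) (q : ι → ℝ[X]) : Prop :=
  ∀ k, ∃ A : ℝ, 0 ≤ A ∧ ∀ i, |(taylor (c i) (q i)).coeff k| ≤ A * (σ i * ρ i ^ (w - k))

namespace TaylorBdd

variable {ι : Type*} {c ρ σ τ : ι → ℝ} {v w : ℕ} {p q : ι → ℝ[X]}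

lemma add (hp : TaylorBdd c ρ σ w p) (hq : TaylorBdd c ρ σ w q) :
    TaylorBdd c ρ σ w (fun i => p i + q i) := by
  intro k
  obtain ⟨A, hA, hpA⟩ := hp k
  obtain ⟨B, hB, hqB⟩ := hq k
  refine ⟨A + B, add_nonneg hA hB, fun i => ?_⟩
  simp only [map_add, coeff_add]
  exact (abs_add_le _ _).trans (by linarith [hpA i, hqB i])

lemma neg (hp : TaylorBdd c ρ σ w p) : TaylorBdd c ρ σ w (fun i => - p i) := by
  intro k
  obtain ⟨A, hA, hpA⟩ := hp k
  exact ⟨A, hA, fun i => by simpa using hpA i⟩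

lemma zero : TaylorBdd c ρ σ w (fun _ => 0) :=
  fun _ => ⟨0, le_rfl, fun i => by simp⟩

lemma sum {κ : Type*} (s : Finset κ) {f : κ → ι → ℝ[X]}
    (h : ∀ j ∈ s, TaylorBdd c ρ σ w (f j)) : TaylorBdd c ρ σ w (fun i => ∑ j ∈ s, f j i) := by
  classical
  induction s using Finset.induction_on with
  | empty => simpa using zero
  | insert j s hj ih =>
    simp only [sum_insert hj]
    exact (h j (mem_insert_self _ _)).add (ih fun l hl => h l (mem_insert_of_mem hl))

lemma mono (h : TaylorBdd c ρ σ w q) (hσ : ∀ i, 0 ≤ σ i) (hρ : ∀ i, 0 ≤ ρ i)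
    (hρ' : ∀ i, ρ i ≤ 1) (hστ : ∀ i, σ i ≤ τ i) (hv : v ≤ w) : TaylorBdd c ρ τ v q := by
  intro k
  obtain ⟨A, hA, h⟩ := h k
  refine ⟨A, hA, fun i => (h i).trans (mul_le_mul_of_nonneg_left ?_ hA)⟩
  exact mul_le_mul (hστ i) (pow_le_pow_of_le_one (hρ i) (hρ' i) (by omega))
    (pow_nonneg (hρ i) _) ((hσ i).trans (hστ i))

lemma mul (hp : TaylorBdd c ρ σ v p) (hq : TaylorBdd c ρ τ w q) (hσ : ∀ i, 0 ≤ σ i)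
    (hτ : ∀ i, 0 ≤ τ i) (hρ : ∀ i, 0 ≤ ρ i) (hρ' : ∀ i, ρ i ≤ 1) :
    TaylorBdd c ρ (fun i => σ i * τ i) (v + w) (fun i => p i * q i) := by
  intro k
  choose A hA hpA using hp
  choose B hB hqB using hq
  refine ⟨∑ x ∈ antidiagonal k, A x.1 * B x.2,
    sum_nonneg fun x _ => mul_nonneg (hA _) (hB _), fun i => ?_⟩
  rw [taylor_mul, coeff_mul, sum_mul]
  refine (abs_sum_le_sum_abs _ _).trans (sum_le_sum fun x hx => ?_)
  have hx' := mem_antidiagonal.mp hx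
  have hpow : ρ i ^ (v - x.1 + (w - x.2)) ≤ ρ i ^ (v + w - k) :=
    pow_le_pow_of_le_one (hρ i) (hρ' i) (by omega)
  calc |(taylor (c i) (p i)).coeff x.1 * (taylor (c i) (q i)).coeff x.2|
      ≤ A x.1 * (σ i * ρ i ^ (v - x.1)) * (B x.2 * (τ i * ρ i ^ (w - x.2))) := by
        rw [abs_mul]
        exact mul_le_mul (hpA x.1 i) (hqB x.2 i) (abs_nonneg _)
          (mul_nonneg (hA _) (mul_nonneg (hσ i) (pow_nonneg (hρ i) _)))
    _ = A x.1 * B x.2 * (σ i * τ i * ρ i ^ (v - x.1 + (w - x.2))) := by ring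
    _ ≤ A x.1 * B x.2 * (σ i * τ i * ρ i ^ (v + w - k)) :=
        mul_le_mul_of_nonneg_left
          (mul_le_mul_of_nonneg_left hpow (mul_nonneg (hσ i) (hτ i))) (mul_nonneg (hA _) (hB _))

lemma hasseDeriv (h : TaylorBdd c ρ σ w q) (j : ℕ) :
    TaylorBdd c ρ σ (w - j) (fun i => hasseDeriv j (q i)) := by
  intro k
  obtain ⟨A, hA, h⟩ := h (k + j)
  refine ⟨((k + j).choose k : ℝ) * A, by positivity, fun i => ?_⟩
  have hcomp : Polynomial.hasseDeriv k (Polynomial.hasseDeriv j (q i)) =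
      (k + j).choose k • Polynomial.hasseDeriv (k + j) (q i) := by
    simpa using LinearMap.congr_fun (hasseDeriv_comp (R := ℝ) k j) (q i)
  rw [taylor_coeff, hcomp, eval_smul, nsmul_eq_mul, abs_mul, Nat.abs_cast, mul_assoc,
    ← taylor_coeff, Nat.sub_sub, Nat.add_comm j k]
  exact mul_le_mul_of_nonneg_left (h i) (Nat.cast_nonneg _)

lemma derivative (h : TaylorBdd c ρ σ w q) :
    TaylorBdd c ρ σ (w - 1) (fun i => derivative (q i)) := by
  simpa [hasseDeriv_one] using h.hasseDeriv 1

lemma C_mul (h : TaylorBdd c ρ σ w q) (a : ℝ) : TaylorBdd c ρ σ w (fun i => C a * q i) := by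
  intro k
  obtain ⟨A, hA, h⟩ := h k
  refine ⟨|a| * A, by positivity, fun i => ?_⟩
  rw [taylor_mul, taylor_C, coeff_C_mul, abs_mul, mul_assoc]
  exact mul_le_mul_of_nonneg_left (h i) (abs_nonneg _)

lemma X_sub_C_pow (hρ : ∀ i, 0 ≤ ρ i) (j : ℕ) :
    TaylorBdd c ρ (fun _ => 1) j (fun i => (X - C (c i)) ^ j) := by
  intro k
  refine ⟨1, zero_le_one, fun i => ?_⟩
  have htaylor : taylor (c i) ((X - C (c i)) ^ j) = X ^ j := by
    rw [taylor_pow]; simp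
  rw [htaylor, coeff_X_pow]
  split_ifs with h
  · simp [h]
  · simpa using pow_nonneg (hρ i) _

lemma one (hρ : ∀ i, 0 ≤ ρ i) : TaylorBdd c ρ (fun _ => 1) 0 (fun _ => 1) := by
  simpa using X_sub_C_pow (c := c) hρ 0

end TaylorBdd

end BernsteinPolynomials

section BinomialParameters

open Polynomial Finset

/-! ### Iterated bias of centred monomials -/

/-- The parameters of a binomial model: a positive sample size `n` and a success probability `x`.
It serves as the index type over which Taylor coefficients at `x` are bounded uniformly. -/
structure BinomialParam where
  n : ℕ
  x : ℝ
  n_pos : 0 < n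
  x_mem : x ∈ Set.Icc (0 : ℝ) 1

/-- The variance `x * (1 - x)` of a Bernoulli variable, regularized near the endpoints of `[0, 1]`
by the resolution `1 / n` of a binomial proportion. -/
noncomputable def regVar (n : ℕ) (x : ℝ) : ℝ := max (x * (1 - x)) (1 / n)

/-- The standard deviation of the binomial proportion of `n` trials, regularized as in `regVar`. -/
noncomputable def regStd (n : ℕ) (x : ℝ) : ℝ := √(regVar n x / n)

lemma one_div_natCast_le_one (n : ℕ) : 1 / (n : ℝ) ≤ 1 := by
  rw [one_div]; exact Nat.cast_inv_le_one n

lemma regVar_nonneg (n : ℕ) (x : ℝ) : 0 ≤ regVar n x :=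
  le_max_of_le_right (by positivity)

lemma regVar_le_one (n : ℕ) {x : ℝ} (hx : x ∈ Set.Icc (0 : ℝ) 1) : regVar n x ≤ 1 :=
  max_le (mul_le_one₀ hx.2 (sub_nonneg.mpr hx.2) (by linarith [hx.1])) (one_div_natCast_le_one n)

lemma regStd_nonneg (n : ℕ) (x : ℝ) : 0 ≤ regStd n x := Real.sqrt_nonneg _

lemma regStd_sq (n : ℕ) (x : ℝ) : regStd n x ^ 2 = regVar n x / n :=
  Real.sq_sqrt (div_nonneg (regVar_nonneg n x) (Nat.cast_nonneg n))

lemma one_div_le_regStd (n : ℕ) (x : ℝ) : 1 / (n : ℝ) ≤ regStd n x := by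
  refine Real.le_sqrt_of_sq_le ?_
  rw [sq, div_eq_mul_one_div (regVar n x)]
  exact mul_le_mul_of_nonneg_right (le_max_right _ _) (by positivity)

lemma regStd_pos {n : ℕ} (hn : 0 < n) (x : ℝ) : 0 < regStd n x :=
  lt_of_lt_of_le (by positivity) (one_div_le_regStd n x)

lemma regStd_sq_le_one_div (n : ℕ) {x : ℝ} (hx : x ∈ Set.Icc (0 : ℝ) 1) :
    regStd n x ^ 2 ≤ 1 / n := by
  rw [regStd_sq]
  exact div_le_div_of_nonneg_right (regVar_le_one n hx) (Nat.cast_nonneg n)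

lemma regStd_le_one (n : ℕ) {x : ℝ} (hx : x ∈ Set.Icc (0 : ℝ) 1) : regStd n x ≤ 1 :=
  (sq_le_one_iff₀ (regStd_nonneg n x)).mp ((regStd_sq_le_one_div n hx).trans
    (one_div_natCast_le_one n))

lemma taylor_bernsteinVariance (n : ℕ) (x : ℝ) :
    taylor x (bernsteinVariance n) =
      C (x * (1 - x) / n) + C ((1 - 2 * x) / n) * X - C (1 / (n : ℝ)) * X ^ 2 := by
  simp only [bernsteinVariance, taylor_mul, taylor_C, map_sub, taylor_X, taylor_one, C_mul, C_1,
    C_ofNat, div_eq_mul_inv]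
  ring

namespace BinomialParam

variable {ρ σ : BinomialParam → ℝ} {w : ℕ} {q : BinomialParam → ℝ[X]}

lemma taylorBdd_bernsteinVariance (hσ : ∀ i, 0 ≤ σ i) (hρ : ∀ i, 0 ≤ ρ i) (hρ' : ∀ i, ρ i ≤ 1)
    (hvar : ∀ i, i.x * (1 - i.x) / i.n ≤ σ i * ρ i ^ w)
    (hn : ∀ i, 1 / (i.n : ℝ) ≤ σ i * ρ i ^ (w - 1)) :
    TaylorBdd x ρ σ w (fun i => bernsteinVariance i.n) := by
  intro k
  refine ⟨1, zero_le_one, fun i => ?_⟩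
  have hx := i.x_mem
  have : 0 ≤ 1 / (i.n : ℝ) := by positivity
  rw [one_mul, taylor_bernsteinVariance]
  simp only [coeff_sub, coeff_add, coeff_C_mul, coeff_C, coeff_X, coeff_X_pow]
  rcases k with _ | _ | _ | k
  · simpa [abs_of_nonneg (div_nonneg (mul_nonneg hx.1 (sub_nonneg.mpr hx.2))
      (Nat.cast_nonneg i.n))] using hvar i
  · have habs : |1 - 2 * i.x| ≤ 1 := abs_le.mpr ⟨by linarith [hx.2], by linarith [hx.1]⟩
    have := div_le_div_of_nonneg_right habs (Nat.cast_nonneg (α := ℝ) i.n)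
    simpa [abs_div] using this.trans (hn i)
  · have hpow : ρ i ^ (w - 1) ≤ ρ i ^ (w - 2) :=
      pow_le_pow_of_le_one (hρ i) (hρ' i) (by omega)
    simpa using (hn i).trans (mul_le_mul_of_nonneg_left hpow (hσ i))
  · simpa using mul_nonneg (hσ i) (pow_nonneg (hρ i) _)

lemma taylorBdd_bernsteinCentralMoment (hρ : ∀ i, 0 ≤ ρ i) (hρ' : ∀ i, ρ i ≤ 1)
    (hV : TaylorBdd x ρ (fun _ => 1) 2 (fun i => bernsteinVariance i.n)) (j : ℕ) :
    TaylorBdd x ρ (fun _ => 1) j (fun i => bernsteinCentralMoment i.n j) := by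
  induction j using Nat.strong_induction_on with
  | _ j ih =>
    rcases j with _ | _ | j
    · simpa only [bernsteinCentralMoment_zero] using TaylorBdd.one hρ
    · simpa only [fun i : BinomialParam => bernsteinCentralMoment_one i.n_pos] using TaylorBdd.zero
    · simp only [fun i : BinomialParam => bernsteinCentralMoment_succ i.n_pos (j + 1)]
      exact (hV.mul (((ih (j + 1) (by omega)).derivative).add
        ((ih j (by omega)).C_mul ((j + 1 : ℕ) : ℝ)))
        (fun _ => zero_le_one) (fun _ => zero_le_one) hρ hρ').mono
        (fun _ => by norm_num) hρ hρ' (fun _ => by norm_num) (by omega)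

-- One power of the scale is traded for an explicit factor `1 / n`.
lemma taylorBdd_bernsteinCentralMoment_succ (hρ : ∀ i, 0 ≤ ρ i) (hρ' : ∀ i, ρ i ≤ 1)
    (hV : TaylorBdd x ρ (fun _ => 1) 2 (fun i => bernsteinVariance i.n))
    (hV' : TaylorBdd x ρ (fun i => 1 / (i.n : ℝ)) 1 (fun i => bernsteinVariance i.n)) (j : ℕ) :
    TaylorBdd x ρ (fun i => 1 / (i.n : ℝ)) j (fun i => bernsteinCentralMoment i.n (j + 1)) := by
  induction j using Nat.strong_induction_on with
  | _ j ih =>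
    rcases j with _ | _ | j
    · simpa only [fun i : BinomialParam => bernsteinCentralMoment_one i.n_pos] using TaylorBdd.zero
    · simpa only [fun i : BinomialParam => bernsteinCentralMoment_two i.n_pos] using hV'
    · simp only [fun i : BinomialParam => bernsteinCentralMoment_succ i.n_pos (j + 1 + 1)]
      exact (hV.mul (((ih (j + 1) (by omega)).derivative).add
        ((ih j (by omega)).C_mul ((j + 1 + 1 : ℕ) : ℝ))) (fun _ => zero_le_one)
        (fun i => by positivity) hρ hρ').mono
        (fun i => by simp) hρ hρ' (fun _ => by norm_num) (by omega)

lemma regVar_nonneg (i : BinomialParam) : 0 ≤ regVar i.n i.x := _root_.regVar_nonneg i.n i.x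

lemma regVar_le_one (i : BinomialParam) : regVar i.n i.x ≤ 1 := _root_.regVar_le_one i.n i.x_mem

lemma taylorBdd_bernsteinVariance_regVar :
    TaylorBdd x (fun i => regVar i.n i.x) (fun _ => 1) 2 (fun i => bernsteinVariance i.n) := by
  refine taylorBdd_bernsteinVariance (fun _ => zero_le_one) regVar_nonneg regVar_le_one
    (fun i => ?_) (fun i => by rw [one_mul, pow_one]; exact le_max_right _ _)
  rw [one_mul, sq, div_eq_mul_one_div]
  exact mul_le_mul (le_max_left _ _) (le_max_right _ _) (by positivity) i.regVar_nonneg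

lemma taylorBdd_bernsteinVariance_one_div :
    TaylorBdd x (fun i => regVar i.n i.x) (fun i => 1 / (i.n : ℝ)) 1
      (fun i => bernsteinVariance i.n) := by
  refine taylorBdd_bernsteinVariance (fun i => by positivity) regVar_nonneg regVar_le_one
    (fun i => ?_) (fun i => by simp)
  rw [pow_one, one_div_mul_eq_div]
  exact div_le_div_of_nonneg_right (le_max_left _ _) (Nat.cast_nonneg _)

lemma taylorBdd_bernsteinVariance_regStd :
    TaylorBdd x (fun i => regStd i.n i.x) (fun _ => 1) 2 (fun i => bernsteinVariance i.n) := by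
  refine taylorBdd_bernsteinVariance (fun _ => zero_le_one) (fun i => regStd_nonneg _ _)
    (fun i => regStd_le_one _ i.x_mem) (fun i => ?_) (fun i => by simpa using one_div_le_regStd _ _)
  rw [one_mul, regStd_sq]
  exact div_le_div_of_nonneg_right (le_max_left _ _) (Nat.cast_nonneg _)

lemma taylorBdd_bernsteinMap {J : ℕ} (hσ : ∀ i, 0 ≤ σ i) (hq : ∀ i, (q i).natDegree ≤ J)
    (h : TaylorBdd x (fun i => regStd i.n i.x) σ w q) :
    TaylorBdd x (fun i => regStd i.n i.x) σ w (fun i => bernsteinMap i.n (q i)) := by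
  have hρ : ∀ i : BinomialParam, 0 ≤ regStd i.n i.x := fun i => regStd_nonneg _ _
  have hρ' : ∀ i : BinomialParam, regStd i.n i.x ≤ 1 := fun i => regStd_le_one _ i.x_mem
  simp only [fun i : BinomialParam => bernsteinMap_eq_sum_hasseDeriv i.n (hq i)]
  refine TaylorBdd.sum _ fun j _ => ?_
  exact ((taylorBdd_bernsteinCentralMoment hρ hρ' taylorBdd_bernsteinVariance_regStd j).mul
    (h.hasseDeriv j) (fun _ => zero_le_one) hσ hρ hρ').mono
    (fun i => by simpa using hσ i) hρ hρ' (fun i => by simp) (by omega)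

lemma taylorBdd_sub_bernsteinMap {J : ℕ} (hσ : ∀ i, 0 ≤ σ i) (hq : ∀ i, (q i).natDegree ≤ J)
    (h : TaylorBdd x (fun i => regVar i.n i.x) σ w q) :
    TaylorBdd x (fun i => regVar i.n i.x) (fun i => 1 / (i.n : ℝ) * σ i) (max (w - 1) 1)
      (fun i => q i - bernsteinMap i.n (q i)) := by
  have hn : ∀ i : BinomialParam, 0 ≤ 1 / (i.n : ℝ) := fun i => by positivity
  simp only [fun i : BinomialParam => sub_bernsteinMap_eq_sum_hasseDeriv i.n_pos (hq i)]
  refine (TaylorBdd.sum _ fun j _ => ?_).neg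
  exact ((taylorBdd_bernsteinCentralMoment_succ regVar_nonneg regVar_le_one
    taylorBdd_bernsteinVariance_regVar taylorBdd_bernsteinVariance_one_div (j + 1)).mul
    (h.hasseDeriv (j + 2)) hn hσ regVar_nonneg regVar_le_one).mono
    (fun i => mul_nonneg (hn i) (hσ i)) regVar_nonneg regVar_le_one (fun _ => le_rfl) (by omega)

lemma taylorBdd_one_sub_bernsteinMap_pow (s j : ℕ) :
    TaylorBdd x (fun i => regVar i.n i.x) (fun i => (1 / (i.n : ℝ)) ^ (s + 1))
      (max (j - (s + 1)) 1)
      (fun i => ((1 - bernsteinMap i.n) ^ (s + 1) : Module.End ℝ ℝ[X]) ((X - C i.x) ^ j)) := by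
  have hdeg : ∀ i : BinomialParam, ((X - C i.x) ^ j : ℝ[X]).natDegree ≤ j := fun i => by simp
  induction s with
  | zero =>
    simpa using taylorBdd_sub_bernsteinMap (fun _ => zero_le_one) hdeg
      (TaylorBdd.X_sub_C_pow regVar_nonneg j)
  | succ s ih =>
    have := taylorBdd_sub_bernsteinMap (fun i => by positivity) (fun i =>
      (natDegree_one_sub_bernsteinMap_pow_le i.n_pos (s + 1) _).trans (hdeg i)) ih
    simp only [← pow_succ', show max (max (j - (s + 1)) 1 - 1) 1 = max (j - (s + 1 + 1)) 1 by
      omega] at this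
    simpa only [pow_succ' (1 - bernsteinMap _) (s + 1), Module.End.mul_apply,
      LinearMap.sub_apply, Module.End.one_apply] using this

lemma taylorBdd_one_add_bernsteinMap_pow (s j : ℕ) :
    TaylorBdd x (fun i => regStd i.n i.x) (fun _ => 1) j
      (fun i => ((1 + bernsteinMap i.n) ^ s : Module.End ℝ ℝ[X]) ((X - C i.x) ^ j)) := by
  have hdeg : ∀ i : BinomialParam, ((X - C i.x) ^ j : ℝ[X]).natDegree ≤ j := fun i => by simp
  induction s with
  | zero =>
    simpa only [pow_zero, Module.End.one_apply] using
      TaylorBdd.X_sub_C_pow (fun i => regStd_nonneg _ _) j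
  | succ s ih =>
    simp only [pow_succ', Module.End.mul_apply]
    exact ih.add (taylorBdd_bernsteinMap (fun _ => zero_le_one) (fun i =>
      (natDegree_one_add_bernsteinMap_pow_le i.n_pos s _).trans (hdeg i)) ih)

end BinomialParam

lemma exists_abs_eval_one_sub_bernsteinMap_pow_le (m j : ℕ) : ∃ A : ℝ, 0 ≤ A ∧
    ∀ n : ℕ, 0 < n → ∀ x ∈ Set.Icc (0 : ℝ) 1,
      |(((1 - bernsteinMap n) ^ (m + 1) : Module.End ℝ ℝ[X]) ((X - C x) ^ j)).eval x| ≤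
        A * ((1 / (n : ℝ)) ^ (m + 1) * regVar n x ^ max (j - (m + 1)) 1) := by
  obtain ⟨A, hA, h⟩ := BinomialParam.taylorBdd_one_sub_bernsteinMap_pow m j 0
  refine ⟨A, hA, fun n hn x hx => ?_⟩
  simpa only [taylor_coeff_zero, Nat.sub_zero] using h ⟨n, x, hn, hx⟩

lemma exists_abs_eval_one_add_bernsteinMap_pow_le (m j : ℕ) : ∃ A : ℝ, 0 ≤ A ∧
    ∀ n : ℕ, 0 < n → ∀ x ∈ Set.Icc (0 : ℝ) 1,
      |(((1 + bernsteinMap n) ^ m : Module.End ℝ ℝ[X]) ((X - C x) ^ j)).eval x| ≤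
        A * regStd n x ^ j := by
  obtain ⟨A, hA, h⟩ := BinomialParam.taylorBdd_one_add_bernsteinMap_pow m j 0
  refine ⟨A, hA, fun n hn x hx => ?_⟩
  simpa only [taylor_coeff_zero, Nat.sub_zero, one_mul] using h ⟨n, x, hn, hx⟩

/-! ### The iterated bias of a function -/

lemma bootIter_eval (n : ℕ) (q : ℝ[X]) (m : ℕ) :
    bootIter n (fun y => q.eval y) m =
      fun x => (((1 - bernsteinMap n) ^ m : Module.End ℝ ℝ[X]) q).eval x := by
  induction m with
  | zero => simp [bootIter]
  | succ m ih =>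
    funext x
    rw [bootIter, ih, pow_succ', Module.End.mul_apply, LinearMap.sub_apply, eval_sub,
      eval_bernsteinMap]
    rfl

lemma bernstein'_sub (n : ℕ) (f g : ℝ → ℝ) (x : ℝ) :
    bernstein' n (fun y => f y - g y) x = bernstein' n f x - bernstein' n g x := by
  simp only [bernstein', mul_sub, sum_sub_distrib]

lemma bootIter_sub (n : ℕ) (f g : ℝ → ℝ) (m : ℕ) :
    bootIter n (fun y => f y - g y) m = fun x => bootIter n f m x - bootIter n g m x := by
  induction m with
  | zero => rfl
  | succ m ih =>
    funext x
    simp only [bootIter, ih, bernstein'_sub]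
    ring

lemma natCast_div_mem_Icc {k n : ℕ} (hk : k ∈ range (n + 1)) :
    ((k : ℝ) / n) ∈ Set.Icc (0 : ℝ) 1 := by
  have hk' : (k : ℝ) ≤ n := by exact_mod_cast Nat.lt_succ_iff.mp (mem_range.mp hk)
  exact ⟨by positivity, div_le_one_of_le₀ hk' (Nat.cast_nonneg _)⟩

lemma abs_bernstein'_le (n : ℕ) {f g : ℝ → ℝ} (h : ∀ y ∈ Set.Icc (0 : ℝ) 1, |f y| ≤ g y) {x : ℝ}
    (hx : x ∈ Set.Icc (0 : ℝ) 1) : |bernstein' n f x| ≤ bernstein' n g x := by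
  refine (abs_sum_le_sum_abs _ _).trans (sum_le_sum fun k hk => ?_)
  have hweight : 0 ≤ (n.choose k : ℝ) * x ^ k * (1 - x) ^ (n - k) :=
    mul_nonneg (mul_nonneg (Nat.cast_nonneg _) (pow_nonneg hx.1 _))
      (pow_nonneg (sub_nonneg.mpr hx.2) _)
  rw [abs_mul, abs_of_nonneg hweight]
  exact mul_le_mul_of_nonneg_left (h _ (natCast_div_mem_Icc hk)) hweight

lemma abs_bootIter_le (n : ℕ) {f : ℝ → ℝ} {q : ℝ[X]}
    (h : ∀ y ∈ Set.Icc (0 : ℝ) 1, |f y| ≤ q.eval y) (m : ℕ) :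
    ∀ x ∈ Set.Icc (0 : ℝ) 1,
      |bootIter n f m x| ≤ (((1 + bernsteinMap n) ^ m : Module.End ℝ ℝ[X]) q).eval x := by
  induction m with
  | zero => simpa [bootIter] using h
  | succ m ih =>
    intro x hx
    rw [bootIter, pow_succ', Module.End.mul_apply, LinearMap.add_apply, eval_add,
      eval_bernsteinMap]
    exact (abs_sub _ _).trans (add_le_add (ih x hx) (abs_bernstein'_le n ih hx))

lemma exists_abs_bootIter_le_sum {κ : Type*} [Fintype κ] (m : ℕ) (e : κ → ℕ) : ∃ K : ℝ, 0 ≤ K ∧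
    ∀ n : ℕ, 0 < n → ∀ (g : ℝ → ℝ) (x : ℝ) (β : κ → ℝ), x ∈ Set.Icc (0 : ℝ) 1 → (∀ i, 0 ≤ β i) →
      (∀ y ∈ Set.Icc (0 : ℝ) 1, |g y| ≤ ∑ i, β i * (y - x) ^ e i) →
      |bootIter n g m x| ≤ K * ∑ i, β i * regStd n x ^ e i := by
  choose A hA₀ hA using exists_abs_eval_one_add_bernsteinMap_pow_le m
  refine ⟨∑ i, A (e i), sum_nonneg fun i _ => hA₀ _, fun n hn g x β hx hβ hg => ?_⟩
  have hq : ∀ y ∈ Set.Icc (0 : ℝ) 1, |g y| ≤ (∑ i, β i • (X - C x) ^ e i : ℝ[X]).eval y :=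
    fun y hy => by simpa [eval_finsetSum] using hg y hy
  refine (abs_bootIter_le n hq m x hx).trans ?_
  rw [map_sum, eval_finsetSum, mul_sum]
  refine sum_le_sum fun i _ => ?_
  rw [map_smul, eval_smul, smul_eq_mul]
  calc β i * _ ≤ β i * (A (e i) * regStd n x ^ e i) :=
        mul_le_mul_of_nonneg_left ((le_abs_self _).trans (hA _ n hn x hx)) (hβ i)
    _ = A (e i) * (β i * regStd n x ^ e i) := by ring
    _ ≤ (∑ i, A (e i)) * (β i * regStd n x ^ e i) :=
        mul_le_mul_of_nonneg_right (single_le_sum (fun i _ => hA₀ (e i)) (mem_univ i))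
          (mul_nonneg (hβ i) (pow_nonneg (regStd_nonneg n x) _))

end BinomialParameters

section PolynomialBounds

open Polynomial Finset

/-! ### Bounds on the Taylor coefficients of a polynomial -/

lemma exists_abs_coeff_le {node : ℕ → ℝ} (hnode : Function.Injective node) (J : ℕ) :
    ∃ K : ℝ, 0 ≤ K ∧ ∀ (q : ℝ[X]) (A : ℝ), q.natDegree ≤ J →
      (∀ i ≤ J, |q.eval (node i)| ≤ A) → ∀ k, |q.coeff k| ≤ K * A := by
  set s := range (J + 1)
  set S : ℕ → ℝ := fun k => ∑ i ∈ s, |(Lagrange.basis s node i).coeff k|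
  have hS : ∀ k ∈ s, 0 ≤ S k := fun k _ => sum_nonneg fun _ _ => abs_nonneg _
  refine ⟨∑ k ∈ s, S k, sum_nonneg hS, fun q A hq hA k => ?_⟩
  have hA₀ : 0 ≤ A := (abs_nonneg _).trans (hA 0 J.zero_le)
  have hdeg : q.degree < #s := by
    rw [card_range]
    exact (degree_le_of_natDegree_le hq).trans_lt (by exact_mod_cast Nat.lt_succ_self J)
  by_cases hk : k ∈ s
  · have hcoeff : q.coeff k = ∑ i ∈ s, q.eval (node i) * (Lagrange.basis s node i).coeff k := by
      conv_lhs => rw [Lagrange.eq_interpolate hnode.injOn hdeg]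
      simp [Lagrange.interpolate_apply, finsetSum_coeff]
    calc |q.coeff k| ≤ ∑ i ∈ s, A * |(Lagrange.basis s node i).coeff k| := by
          rw [hcoeff]
          refine (abs_sum_le_sum_abs _ _).trans (sum_le_sum fun i hi => ?_)
          rw [abs_mul]
          exact mul_le_mul_of_nonneg_right (hA i (mem_range_succ_iff.mp hi)) (abs_nonneg _)
      _ = S k * A := by rw [← mul_sum, mul_comm]
      _ ≤ _ := mul_le_mul_of_nonneg_right (single_le_sum hS hk) hA₀
  · rw [coeff_eq_zero_of_natDegree_lt (by simp [s] at hk; omega), abs_zero]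
    exact mul_nonneg (sum_nonneg hS) hA₀

lemma abs_eval_hasseDeriv_le_of_abs_coeff_le {q : ℝ[X]} {J : ℕ} {A R z : ℝ}
    (hq : q.natDegree ≤ J) (hA : ∀ k, |q.coeff k| ≤ A) (hR : 1 ≤ R) (hz : |z| ≤ R) (j : ℕ) :
    |(hasseDeriv j q).eval z| ≤ (J + 1) * 2 ^ J * A * R ^ (J - j) := by
  have hA₀ : 0 ≤ A := (abs_nonneg _).trans (hA 0)
  have hterm : ∀ k, |(hasseDeriv j q).coeff k * z ^ k| ≤ 2 ^ J * A * R ^ (J - j) := fun k => by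
    rw [hasseDeriv_coeff, abs_mul, abs_mul, abs_pow, Nat.abs_cast]
    rcases lt_or_ge J (k + j) with hk | hk
    · rw [coeff_eq_zero_of_natDegree_lt (hq.trans_lt hk)]
      simp only [abs_zero, mul_zero, zero_mul]
      positivity
    · have hchoose : ((k + j).choose j : ℝ) ≤ 2 ^ J := by
        exact_mod_cast (Nat.choose_le_two_pow _ _).trans (Nat.pow_le_pow_right two_pos hk)
      have hpow : |z| ^ k ≤ R ^ (J - j) :=
        (pow_le_pow_left₀ (abs_nonneg z) hz k).trans (pow_le_pow_right₀ hR (by omega))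
      gcongr
      exact hA _
  have hdeg : (hasseDeriv j q).natDegree < J + 1 := by have := natDegree_hasseDeriv_le q j; omega
  rw [eval_eq_sum_range' hdeg]
  refine (abs_sum_le_sum_abs _ _).trans ((sum_le_sum fun k _ => hterm k).trans_eq ?_)
  simp [mul_assoc]

lemma eval_hasseDeriv_comp_affine (q : ℝ[X]) (a l z : ℝ) (j : ℕ) :
    (hasseDeriv j (q.comp (C l * X + C a))).eval z = l ^ j * (hasseDeriv j q).eval (l * z + a) := by
  have htaylor : taylor z (q.comp (C l * X + C a)) = (taylor (l * z + a) q).comp (C l * X) := by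
    simp only [taylor_apply, comp_assoc]
    congr 1
    simp
    ring
  rw [← taylor_coeff, ← taylor_coeff, htaylor, comp_C_mul_X_coeff, mul_comm]

lemma exists_abs_eval_hasseDeriv_le (J : ℕ) : ∃ K : ℝ, 0 ≤ K ∧ ∀ (q : ℝ[X]) (a l A Q z : ℝ),
    q.natDegree ≤ J → 0 < l → (∀ y ∈ Set.Icc a (a + l), |q.eval y| ≤ A) → 1 ≤ Q →
    |z - a| ≤ Q * l → ∀ j, |(hasseDeriv j q).eval z| ≤ K * A * Q ^ (J - j) / l ^ j := by
  set node : ℕ → ℝ := fun i => (i : ℝ) / ((J + 1 : ℕ) : ℝ)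
  have hnode : Function.Injective node := fun a b hab =>
    Nat.cast_injective ((div_left_inj' (Nat.cast_ne_zero.mpr J.succ_ne_zero)).mp hab)
  obtain ⟨K, hK, hcoeff⟩ := exists_abs_coeff_le hnode J
  refine ⟨(J + 1) * 2 ^ J * K, by positivity, fun q a l A Q z hq hl hA hQ hz j => ?_⟩
  set p : ℝ[X] := q.comp (C l * X + C a)
  have hp : p.natDegree ≤ J :=
    natDegree_comp_le.trans ((Nat.mul_le_mul hq natDegree_linear_le).trans (mul_one J).le)
  have hpA : ∀ i ≤ J, |p.eval (node i)| ≤ A := fun i hi => by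
    have hi' : node i ∈ Set.Icc (0 : ℝ) 1 :=
      natCast_div_mem_Icc (mem_range_succ_iff.mpr (hi.trans J.le_succ))
    have hy : l * node i + a ∈ Set.Icc a (a + l) :=
      ⟨by nlinarith [hi'.1], by nlinarith [hi'.2]⟩
    simpa [p] using hA _ hy
  have hζ : |(z - a) / l| ≤ Q := by rwa [abs_div, abs_of_pos hl, div_le_iff₀ hl]
  have hbound := abs_eval_hasseDeriv_le_of_abs_coeff_le hp (hcoeff p A hp hpA) hQ hζ j
  rw [eval_hasseDeriv_comp_affine, mul_div_cancel₀ _ hl.ne', sub_add_cancel, abs_mul,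
    abs_of_pos (pow_pos hl j)] at hbound
  rw [le_div_iff₀ (pow_pos hl j), mul_comm]
  exact hbound.trans_eq (by ring)

end PolynomialBounds

section Whitney

open Polynomial Finset

/-! ### Whitney's inequality -/

lemma fwdDiff_iter_eq_sum (f : ℝ → ℝ) (r : ℕ) (s v : ℝ) :
    (fwdDiff s)^[r] f v =
      ∑ k ∈ range (r + 1), ((-1) ^ (r - k) * (r.choose k : ℝ)) * f (v + k * s) := by
  rw [fwdDiff_iter_eq_sum_shift]
  exact sum_congr rfl fun k _ => by simp

lemma fwdDiff_iter_sub (f g : ℝ → ℝ) (r : ℕ) (s v : ℝ) :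
    (fwdDiff s)^[r] (fun y => f y - g y) v = (fwdDiff s)^[r] f v - (fwdDiff s)^[r] g v := by
  simp only [fwdDiff_iter_eq_sum, mul_sub, sum_sub_distrib]

lemma fwdDiff_iter_comp_affine (f : ℝ → ℝ) (r : ℕ) (c s t z : ℝ) :
    (fwdDiff t)^[r] (fun y => f (c + y * s)) z = (fwdDiff (t * s))^[r] f (c + z * s) := by
  rw [fwdDiff_iter_eq_sum, fwdDiff_iter_eq_sum]
  exact sum_congr rfl fun k _ => by ring_nf

lemma fwdDiff_iter_eval_eq_zero {P : ℝ[X]} {r : ℕ} (hP : P.natDegree < r) (s v : ℝ) :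
    (fwdDiff s)^[r] (fun y => P.eval y) v = 0 := by
  have hlin : (C v + X * C s : ℝ[X]).natDegree ≤ 1 := by compute_degree
  have hQ : (P.comp (C v + X * C s)).natDegree < r :=
    (natDegree_comp_le.trans ((Nat.mul_le_mul_left _ hlin).trans (mul_one _).le)).trans_lt hP
  have hzero := congrFun (fwdDiff_iter_eq_zero_of_degree_lt hQ) 0
  have haffine := fwdDiff_iter_comp_affine (fun y => P.eval y) r v s 1 0
  rw [one_mul, zero_mul, add_zero] at haffine
  rw [← haffine]
  simpa [mul_comm s] using hzero

lemma abs_le_abs_fwdDiff_iter_add {W : ℝ → ℝ} {r : ℕ} {v s M : ℝ} (hM : 0 ≤ M)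
    (hW : ∀ k < r, |W (v + k * s)| ≤ M) :
    |W (v + r * s)| ≤ |(fwdDiff s)^[r] W v| + 2 ^ r * M := by
  set S := ∑ k ∈ range r, ((-1) ^ (r - k) * (r.choose k : ℝ)) * W (v + k * s)
  have hsplit : W (v + r * s) = (fwdDiff s)^[r] W v - S := by
    simp [fwdDiff_iter_eq_sum, sum_range_succ, S]
  have hS : |S| ≤ 2 ^ r * M := calc
    |S| ≤ ∑ k ∈ range r, (r.choose k : ℝ) * M := by
        refine (abs_sum_le_sum_abs _ _).trans (sum_le_sum fun k hk => ?_)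
        rw [abs_mul, abs_mul, abs_neg_one_pow, one_mul, Nat.abs_cast]
        exact mul_le_mul_of_nonneg_left (hW k (mem_range.mp hk)) (Nat.cast_nonneg _)
    _ ≤ ∑ k ∈ range (r + 1), (r.choose k : ℝ) * M :=
        sum_le_sum_of_subset_of_nonneg (range_subset_range.mpr r.le_succ)
          fun _ _ _ => by positivity
    _ = 2 ^ r * M := by
        rw [← sum_mul]
        exact_mod_cast congrArg (fun c : ℕ => (c : ℝ) * M) (Nat.sum_range_choose r)
  rw [hsplit]
  exact (abs_sub _ _).trans (add_le_add_right hS _)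

lemma abs_le_of_abs_fwdDiff_iter_le {r N : ℕ} {W : ℝ → ℝ} {B : ℝ} (hB : 0 ≤ B)
    (hzero : ∀ i : ℕ, i ≤ r → W i = 0)
    (hdiff : ∀ i : ℕ, i + (r + 1) ≤ N → |(fwdDiff 1)^[r + 1] W i| ≤ B) (i : ℕ) (hi : i ≤ N) :
    |W i| ≤ (1 + 2 ^ (r + 1)) ^ i * B := by
  have hbase : (1 : ℝ) ≤ 1 + 2 ^ (r + 1) := le_add_of_nonneg_right (by positivity)
  induction i using Nat.strong_induction_on with
  | _ i ih =>
    rcases le_or_gt i r with hir | hir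
    · rw [hzero i hir, abs_zero]
      positivity
    obtain ⟨j, rfl⟩ := Nat.exists_eq_add_of_le' hir
    have hprev : ∀ k < r + 1, |W (j + k * 1)| ≤ (1 + 2 ^ (r + 1)) ^ (j + r) * B := fun k hk => by
      have hjk := ih (j + k) (by omega) (by omega)
      rw [Nat.cast_add] at hjk
      rw [mul_one]
      exact hjk.trans (mul_le_mul_of_nonneg_right (pow_le_pow_right₀ hbase (by omega)) hB)
    have hstep := abs_le_abs_fwdDiff_iter_add (by positivity) hprev
    rw [mul_one, ← Nat.cast_add] at hstep
    calc |W ((j + (r + 1) : ℕ) : ℝ)|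
        ≤ B + 2 ^ (r + 1) * ((1 + 2 ^ (r + 1)) ^ (j + r) * B) :=
          hstep.trans (add_le_add_left (hdiff j hi) _)
      _ ≤ (1 + 2 ^ (r + 1)) ^ (j + r) * B + 2 ^ (r + 1) * ((1 + 2 ^ (r + 1)) ^ (j + r) * B) :=
          add_le_add_left (le_mul_of_one_le_left hB (one_le_pow₀ hbase)) _
      _ = (1 + 2 ^ (r + 1)) ^ (j + (r + 1)) * B := by ring

lemma exists_natDegree_le_eval_natCast_eq (r : ℕ) (g : ℕ → ℝ) :
    ∃ L : ℝ[X], L.natDegree ≤ r ∧ ∀ i : ℕ, i ≤ r → L.eval (i : ℝ) = g i := by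
  have hinj : Set.InjOn (fun i : ℕ => (i : ℝ)) (range (r + 1)) := Nat.cast_injective.injOn
  have hdeg := Lagrange.degree_interpolate_lt g hinj
  rw [card_range] at hdeg
  exact ⟨Lagrange.interpolate (range (r + 1)) (fun i : ℕ => (i : ℝ)) g,
    natDegree_le_of_degree_le (Order.le_of_lt_succ (by exact_mod_cast hdeg)),
    fun i hi => Lagrange.eval_interpolate_at_node g hinj (mem_range_succ_iff.mpr hi)⟩

lemma exists_abs_eval_le (J : ℕ) : ∃ K : ℝ, 0 ≤ K ∧ ∀ (q : ℝ[X]) (A : ℝ), q.natDegree ≤ J →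
    (∀ i : ℕ, i ≤ J → |q.eval (i : ℝ)| ≤ A) → ∀ z ∈ Set.Icc (0 : ℝ) J, |q.eval z| ≤ K * A := by
  obtain ⟨K, hK, hcoeff⟩ := exists_abs_coeff_le (Nat.cast_injective (R := ℝ)) J
  refine ⟨(J + 1) * 2 ^ J * K * (J + 1) ^ J, by positivity, fun q A hq hA z hz => ?_⟩
  have hz' : |z| ≤ (J : ℝ) + 1 := by rw [abs_of_nonneg hz.1]; linarith [hz.2]
  have h := abs_eval_hasseDeriv_le_of_abs_coeff_le hq (hcoeff q A hq hA)
    (le_add_of_nonneg_left J.cast_nonneg) hz' 0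
  rw [hasseDeriv_zero, LinearMap.id_apply, Nat.sub_zero] at h
  exact h.trans_eq (by ring)

lemma add_mul_mem_Icc {α β c s R t : ℝ} (hc : c ∈ Set.Icc α β) (hcs : c + R * s ∈ Set.Icc α β)
    (ht : t ∈ Set.Icc 0 R) : c + t * s ∈ Set.Icc α β := by
  rcases le_total 0 s with hs | hs
  · exact ⟨by nlinarith [hc.1, ht.1], by nlinarith [hcs.2, ht.2]⟩
  · exact ⟨by nlinarith [hcs.1, ht.2], by nlinarith [hc.2, ht.1]⟩

/-- Differences of order `r` of `f` inside `[α, β]` are bounded by `ω`. -/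
def FwdDiffBdd (r : ℕ) (f : ℝ → ℝ) (α β ω : ℝ) : Prop :=
  ∀ v s : ℝ, v ∈ Set.Icc α β → v + r * s ∈ Set.Icc α β → |(fwdDiff s)^[r] f v| ≤ ω

lemma FwdDiffBdd.nonneg {r : ℕ} {f : ℝ → ℝ} {α β ω : ℝ} (h : FwdDiffBdd r f α β ω)
    (hαβ : α ≤ β) : 0 ≤ ω :=
  (abs_nonneg _).trans (h α 0 ⟨le_rfl, hαβ⟩ (by simpa using hαβ))

/-- Interpolation of `G` at `r + 1` equidistant nodes inside `[α, β]` has error at most `K` times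
the step. The interpolating polynomial `L` is taken in the rescaled variable in which the nodes
are `0, …, r`. -/
def InterpBdd (r : ℕ) (G : ℝ → ℝ) (α β K : ℝ) : Prop :=
  ∀ c s : ℝ, c ∈ Set.Icc α β → c + r * s ∈ Set.Icc α β → ∀ L : ℝ[X], L.natDegree ≤ r →
    (∀ i : ℕ, i ≤ r → L.eval (i : ℝ) = G (c + i * s)) →
      ∀ z ∈ Set.Icc (0 : ℝ) r, |G (c + z * s) - L.eval z| ≤ K * |s|

lemma exists_interpBdd_of_lipschitzOnWith (r : ℕ) {G : ℝ → ℝ} {α β : ℝ} {M : NNReal}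
    (hG : LipschitzOnWith M G (Set.Icc α β)) : ∃ K, 0 ≤ K ∧ InterpBdd r G α β K := by
  obtain ⟨K, hK, heval⟩ := exists_abs_eval_le r
  refine ⟨M * r + K * (M * r), by positivity, fun c s hc hcs L hL hLG z hz => ?_⟩
  have hnear : ∀ t ∈ Set.Icc (0 : ℝ) r, |G (c + t * s) - G c| ≤ M * r * |s| := fun t ht => by
    have hdist := hG.dist_le_mul _ (add_mul_mem_Icc hc hcs ht) _ hc
    rw [Real.dist_eq, Real.dist_eq, add_sub_cancel_left, abs_mul, abs_of_nonneg ht.1] at hdist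
    refine hdist.trans ?_
    rw [mul_assoc]
    gcongr
    exact ht.2
  have hpoly := heval (L - C (G c)) (M * r * |s|) (natDegree_sub_C.le.trans hL) (fun i hi => by
    rw [eval_sub, eval_C, hLG i hi]
    exact hnear i ⟨i.cast_nonneg, by exact_mod_cast hi⟩) z hz
  rw [eval_sub, eval_C] at hpoly
  calc |G (c + z * s) - L.eval z| = |(G (c + z * s) - G c) - (L.eval z - G c)| := by
        rw [sub_sub_sub_cancel_right]
    _ ≤ |G (c + z * s) - G c| + |L.eval z - G c| := abs_sub _ _
    _ ≤ (M * r + K * (M * r)) * |s| := by linarith [hnear z hz]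

lemma abs_sub_eval_interpolant_le {r N : ℕ} {G : ℝ → ℝ} {α β ω c s : ℝ} {L : ℝ[X]} (hω : 0 ≤ ω)
    (hG : ∀ c s : ℝ, c ∈ Set.Icc α β → c + (r + 1) * s ∈ Set.Icc α β →
      |(fwdDiff s)^[r + 1] G c| ≤ ω * |s|)
    (hc : c ∈ Set.Icc α β) (hcs : c + N * s ∈ Set.Icc α β) (hL : L.natDegree ≤ r)
    (hLG : ∀ i : ℕ, i ≤ r → L.eval (i : ℝ) = G (c + i * s)) {i : ℕ} (hi : i ≤ N) :
    |G (c + i * s) - L.eval (i : ℝ)| ≤ (1 + 2 ^ (r + 1)) ^ i * (ω * |s|) := by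
  refine abs_le_of_abs_fwdDiff_iter_le (r := r) (N := N)
    (W := fun z => G (c + z * s) - L.eval z) (by positivity)
    (fun i hi => by simp [hLG i hi]) (fun i hi => ?_) i hi
  rw [fwdDiff_iter_sub, fwdDiff_iter_comp_affine, fwdDiff_iter_eval_eq_zero (by omega), sub_zero,
    one_mul]
  have hi' : (i : ℝ) + (r + 1) ≤ N := by exact_mod_cast hi
  have hi₀ : (0 : ℝ) ≤ i := i.cast_nonneg
  have : (0 : ℝ) ≤ r := r.cast_nonneg
  refine hG _ _ (add_mul_mem_Icc hc hcs ⟨hi₀, by linarith⟩) ?_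
  rw [add_assoc, ← add_mul]
  exact add_mul_mem_Icc hc hcs ⟨by linarith, hi'⟩

lemma InterpBdd.exists_abs_sub_le_of_le_half (r : ℕ) : ∃ K' : ℝ, 0 ≤ K' ∧
    ∀ (G : ℝ → ℝ) (α β ω K : ℝ), 0 ≤ ω →
      (∀ c s : ℝ, c ∈ Set.Icc α β → c + (r + 1) * s ∈ Set.Icc α β →
        |(fwdDiff s)^[r + 1] G c| ≤ ω * |s|) →
      InterpBdd r G α β K → ∀ c s : ℝ, c ∈ Set.Icc α β → c + r * s ∈ Set.Icc α β →
        ∀ L : ℝ[X], L.natDegree ≤ r → (∀ i : ℕ, i ≤ r → L.eval (i : ℝ) = G (c + i * s)) →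
          ∀ z ∈ Set.Icc (0 : ℝ) (r / 2), |G (c + z * s) - L.eval z| ≤
            (K / 2 + K' * ω) * |s| := by
  obtain ⟨K₁, hK₁, heval⟩ := exists_abs_eval_le r
  refine ⟨K₁ * (1 + 2 ^ (r + 1)) ^ (2 * r) / 2, by positivity,
    fun G α β ω K hω hG hK c s hc hcs L hL hLG z hz => ?_⟩
  have hr₀ : (0 : ℝ) ≤ r := r.cast_nonneg
  have hcs₂ : c + (2 * r : ℕ) * (s / 2) ∈ Set.Icc α β := by
    convert hcs using 1
    push_cast
    ring
  obtain ⟨L₂, hL₂, hL₂G⟩ := exists_natDegree_le_eval_natCast_eq r fun i => G (c + i * (s / 2))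
  have hcoarse : |(L₂.comp (C 2 * X) - L).eval z| ≤
      K₁ * ((1 + 2 ^ (r + 1)) ^ (2 * r) * (ω * |s / 2|)) := by
    have hlin : (C 2 * X : ℝ[X]).natDegree ≤ 1 := by compute_degree
    have hdeg : (L₂.comp (C 2 * X) - L).natDegree ≤ r := (natDegree_sub_le _ _).trans (max_le
      (natDegree_comp_le.trans ((Nat.mul_le_mul hL₂ hlin).trans (mul_one r).le)) hL)
    refine heval _ _ hdeg (fun i hi => ?_) z ⟨hz.1, by linarith [hz.2]⟩
    have hnode := abs_sub_eval_interpolant_le hω hG hc hcs₂ hL₂ hL₂G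
      (Nat.mul_le_mul_left 2 hi)
    have hcast : c + ((2 * i : ℕ) : ℝ) * (s / 2) = c + i * s := by push_cast; ring
    rw [hcast, ← hLG i hi, abs_sub_comm] at hnode
    rw [eval_sub, eval_comp, eval_mul, eval_C, eval_X, ← Nat.cast_ofNat, ← Nat.cast_mul]
    refine hnode.trans
      (mul_le_mul_of_nonneg_right (pow_le_pow_right₀ ?_ (by omega)) (by positivity))
    exact le_add_of_nonneg_right (by positivity)
  have hfine := hK c (s / 2) hc
    (add_mul_mem_Icc hc hcs₂ ⟨hr₀, by push_cast; linarith⟩) L₂ hL₂ hL₂G (2 * z)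
    ⟨by linarith [hz.1], by linarith [hz.2]⟩
  calc |G (c + z * s) - L.eval z|
      = |(G (c + 2 * z * (s / 2)) - L₂.eval (2 * z)) + (L₂.comp (C 2 * X) - L).eval z| := by
        rw [show c + 2 * z * (s / 2) = c + z * s by ring]
        simp
    _ ≤ K * |s / 2| + K₁ * ((1 + 2 ^ (r + 1)) ^ (2 * r) * (ω * |s / 2|)) :=
        (abs_add_le _ _).trans (add_le_add hfine hcoarse)
    _ = (K / 2 + K₁ * (1 + 2 ^ (r + 1)) ^ (2 * r) / 2 * ω) * |s| := by
        rw [abs_div, abs_two]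
        ring

lemma InterpBdd.exists_halve (r : ℕ) : ∃ K' : ℝ, 0 ≤ K' ∧ ∀ (G : ℝ → ℝ) (α β ω K : ℝ), 0 ≤ ω →
    (∀ c s : ℝ, c ∈ Set.Icc α β → c + (r + 1) * s ∈ Set.Icc α β →
      |(fwdDiff s)^[r + 1] G c| ≤ ω * |s|) →
    InterpBdd r G α β K → InterpBdd r G α β (K / 2 + K' * ω) := by
  obtain ⟨K', hK', hleft⟩ := InterpBdd.exists_abs_sub_le_of_le_half r
  refine ⟨K', hK', fun G α β ω K hω hG hK c s hc hcs L hL hLG z hz => ?_⟩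
  rcases le_total z (r / 2) with hz' | hz'
  · exact hleft G α β ω K hω hG hK c s hc hcs L hL hLG z ⟨hz.1, hz'⟩
  -- The right half is the left half of the reversed progression of nodes.
  have hlin : (C (r : ℝ) - X : ℝ[X]).natDegree ≤ 1 := by compute_degree
  have hnode : ∀ i : ℕ, i ≤ r →
      (L.comp (C (r : ℝ) - X)).eval (i : ℝ) = G (c + r * s + i * -s) := fun i hi => by
    have hi' := hLG (r - i) (r.sub_le i)
    rw [Nat.cast_sub hi] at hi'
    rw [eval_comp, eval_sub, eval_C, eval_X, hi']
    ring_nf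
  have hright := hleft G α β ω K hω hG hK (c + r * s) (-s) hcs (by convert hc using 1; ring)
    (L.comp (C (r : ℝ) - X))
    (natDegree_comp_le.trans ((Nat.mul_le_mul hL hlin).trans (mul_one r).le)) hnode (r - z)
    ⟨by linarith [hz.2], by linarith⟩
  rw [eval_comp, eval_sub, eval_C, eval_X, abs_neg, sub_sub_cancel] at hright
  convert hright using 4
  ring

lemma exists_interpBdd (r : ℕ) : ∃ K : ℝ, 0 ≤ K ∧ ∀ (G : ℝ → ℝ) (α β ω : ℝ) (M : NNReal), 0 ≤ ω →
    LipschitzOnWith M G (Set.Icc α β) →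
    (∀ c s : ℝ, c ∈ Set.Icc α β → c + (r + 1) * s ∈ Set.Icc α β →
      |(fwdDiff s)^[r + 1] G c| ≤ ω * |s|) →
    InterpBdd r G α β (K * ω) := by
  obtain ⟨K', hK', hhalve⟩ := InterpBdd.exists_halve r
  refine ⟨2 * K', by positivity, fun G α β ω M hω hM hG => ?_⟩
  obtain ⟨K₀, -, hbase⟩ := exists_interpBdd_of_lipschitzOnWith r hM
  -- `2 * K' * ω` is the fixed point of the halving step `K ↦ K / 2 + K' * ω`.
  have hiter : ∀ n : ℕ, InterpBdd r G α β ((K₀ - 2 * K' * ω) * (1 / 2) ^ n + 2 * K' * ω) := by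
    intro n
    induction n with
    | zero => simpa using hbase
    | succ n ih =>
      convert hhalve G α β ω _ hω hG ih using 1
      ring
  intro c s hc hcs L hL hLG z hz
  have hlim : Filter.Tendsto
      (fun n : ℕ => ((K₀ - 2 * K' * ω) * (1 / 2) ^ n + 2 * K' * ω) * |s|) Filter.atTop
      (nhds (((K₀ - 2 * K' * ω) * 0 + 2 * K' * ω) * |s|)) :=
    (((tendsto_pow_atTop_nhds_zero_of_lt_one (by norm_num) (by norm_num)).const_mul _).add_const
      _).mul_const _
  rw [mul_zero, zero_add] at hlim
  exact ge_of_tendsto' hlim fun n => hiter n c s hc hcs L hL hLG z hz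

lemma exists_lipschitzOnWith_primitive {f : ℝ → ℝ} (hf : Continuous f) (α β : ℝ) :
    ∃ M, LipschitzOnWith M (fun y => ∫ t in α..y, f t) (Set.Icc α β) := by
  obtain ⟨F, hF⟩ := (isCompact_Icc (a := α) (b := β)).exists_bound_of_continuousOn hf.continuousOn
  have hderiv : ∀ y, HasDerivAt (fun y => ∫ t in α..y, f t) (f y) y := fun y =>
    (hf.integral_hasStrictDerivAt α y).hasDerivAt
  refine ⟨F.toNNReal, (convex_Icc α β).lipschitzOnWith_of_nnnorm_deriv_le
    (fun y _ => (hderiv y).differentiableAt) fun y hy => ?_⟩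
  rw [(hderiv y).deriv]
  exact NNReal.le_toNNReal_of_coe_le (hF y hy)

lemma fwdDiff_iter_succ_primitive {f : ℝ → ℝ} (hf : Continuous f) (r : ℕ) (α c s : ℝ) :
    (fwdDiff s)^[r + 1] (fun y => ∫ t in α..y, f t) c =
      ∫ t in (0 : ℝ)..s, (fwdDiff s)^[r] f (c + t) := by
  have hint : ∀ a b, IntervalIntegrable f MeasureTheory.volume a b := hf.intervalIntegrable
  have hfirst : fwdDiff s (fun y => ∫ t in α..y, f t) = fun y => ∫ t in (0 : ℝ)..s, f (y + t) := by
    ext y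
    rw [fwdDiff, intervalIntegral.integral_interval_sub_left (hint _ _) (hint _ _),
      intervalIntegral.integral_comp_add_left, add_zero]
  rw [Function.iterate_succ_apply, hfirst, fwdDiff_iter_eq_sum]
  simp only [fwdDiff_iter_eq_sum]
  rw [intervalIntegral.integral_finsetSum
    (fun k _ => Continuous.intervalIntegrable (by fun_prop) _ _)]
  refine sum_congr rfl fun k _ => ?_
  rw [intervalIntegral.integral_const_mul]
  simp only [add_right_comm]

lemma FwdDiffBdd.abs_fwdDiff_iter_succ_primitive_le {r : ℕ} {f : ℝ → ℝ} {α β ω : ℝ}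
    (h : FwdDiffBdd r f α β ω) (hf : Continuous f) {c s : ℝ} (hc : c ∈ Set.Icc α β)
    (hcs : c + (r + 1) * s ∈ Set.Icc α β) :
    |(fwdDiff s)^[r + 1] (fun y => ∫ t in α..y, f t) c| ≤ ω * |s| := by
  have : (0 : ℝ) ≤ r := r.cast_nonneg
  have hscale : (∫ t in (0 : ℝ)..s, (fwdDiff s)^[r] f (c + t)) =
      s * ∫ θ in (0 : ℝ)..1, (fwdDiff s)^[r] f (c + θ * s) := by
    simpa using (intervalIntegral.mul_integral_comp_mul_right (a := 0) (b := 1)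
      (f := fun t => (fwdDiff s)^[r] f (c + t)) s).symm
  have hbound : ‖∫ θ in (0 : ℝ)..1, (fwdDiff s)^[r] f (c + θ * s)‖ ≤ ω * |1 - 0| :=
    intervalIntegral.norm_integral_le_of_norm_le_const fun θ hθ => by
      rw [Set.uIoc_of_le zero_le_one] at hθ
      refine h _ _ (add_mul_mem_Icc hc hcs ⟨hθ.1.le, by linarith [hθ.2]⟩) ?_
      rw [add_assoc, ← add_mul]
      exact add_mul_mem_Icc hc hcs ⟨by linarith [hθ.1], by linarith [hθ.2]⟩
  rw [fwdDiff_iter_succ_primitive hf, hscale, abs_mul, mul_comm]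
  rw [sub_zero, abs_one, mul_one, Real.norm_eq_abs] at hbound
  exact mul_le_mul_of_nonneg_right hbound (abs_nonneg s)

lemma InterpBdd.exists_polynomial {r : ℕ} {G : ℝ → ℝ} {α β K : ℝ} (h : InterpBdd r G α β K)
    (hr : r ≠ 0) (hαβ : α < β) : ∃ P : ℝ[X], P.natDegree ≤ r ∧
      ∀ y ∈ Set.Icc α β, |G y - P.eval y| ≤ K * ((β - α) / r) := by
  have hr₀ : (0 : ℝ) < r := by positivity
  set s : ℝ := (β - α) / r
  have hs : 0 < s := div_pos (sub_pos.mpr hαβ) hr₀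
  have hrs : r * s = β - α := mul_div_cancel₀ _ hr₀.ne'
  obtain ⟨L, hL, hLG⟩ := exists_natDegree_le_eval_natCast_eq r fun i => G (α + i * s)
  have hlin : (C s⁻¹ * (X - C α) : ℝ[X]).natDegree ≤ 1 := by compute_degree
  refine ⟨L.comp (C s⁻¹ * (X - C α)),
    natDegree_comp_le.trans ((Nat.mul_le_mul hL hlin).trans (mul_one r).le), fun y hy => ?_⟩
  have hz : s⁻¹ * (y - α) ∈ Set.Icc (0 : ℝ) r :=
    ⟨mul_nonneg (inv_nonneg.mpr hs.le) (sub_nonneg.mpr hy.1), by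
      rw [inv_mul_le_iff₀ hs]; linarith [hy.2]⟩
  have hinterp := h α s ⟨le_rfl, hαβ.le⟩ ⟨by nlinarith, by linarith⟩ L hL hLG _ hz
  rw [mul_right_comm, inv_mul_cancel₀ hs.ne', one_mul, add_sub_cancel, abs_of_pos hs] at hinterp
  simpa using hinterp

lemma abs_mul_abs_integral_comp_add_mul_le {g Γ : ℝ → ℝ} {x c E : ℝ} (hg : Continuous g)
    (hΓ : ∀ y, HasDerivAt Γ (g y) y) (hx : |Γ x| ≤ E) (hxc : |Γ (x + c)| ≤ E) :
    |c| * |∫ t in (0 : ℝ)..1, g (x + c * t)| ≤ 2 * E := by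
  have hchange := intervalIntegral.mul_integral_comp_add_mul (a := (0 : ℝ)) (b := 1) (f := g)
    c x
  rw [intervalIntegral.integral_eq_sub_of_hasDerivAt (fun y _ => hΓ y)
    (hg.intervalIntegrable _ _), mul_zero, add_zero, mul_one] at hchange
  rw [← abs_mul, hchange]
  exact (abs_sub _ _).trans (by linarith)

lemma integral_fwdDiff_iter {g : ℝ → ℝ} (hg : Continuous g) (r : ℕ) (x τ : ℝ) :
    (∫ t in (0 : ℝ)..1, (fwdDiff (t * τ))^[r] g x) = (-1) ^ r * g x +
      ∑ k ∈ range r, ((-1) ^ (r - (k + 1)) * (r.choose (k + 1) : ℝ)) *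
        ∫ t in (0 : ℝ)..1, g (x + (k + 1) * τ * t) := by
  simp only [fwdDiff_iter_eq_sum]
  rw [intervalIntegral.integral_finsetSum
    (fun k _ => Continuous.intervalIntegrable (by fun_prop) _ _), sum_range_succ', add_comm]
  congr 1
  · simp
  · refine sum_congr rfl fun k _ => ?_
    rw [intervalIntegral.integral_const_mul]
    congr 2
    ext t
    push_cast
    ring_nf

lemma abs_le_of_abs_integral_le {g : ℝ → ℝ} (hg : Continuous g) {r : ℕ} {x τ ω M : ℝ}
    (hM : 0 ≤ M) (hω : ∀ t ∈ Set.Icc (0 : ℝ) 1, |(fwdDiff (t * τ))^[r] g x| ≤ ω)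
    (hint : ∀ k < r, |∫ t in (0 : ℝ)..1, g (x + (k + 1) * τ * t)| ≤ M) :
    |g x| ≤ ω + 2 ^ r * M := by
  set S := ∑ k ∈ range r, ((-1) ^ (r - (k + 1)) * (r.choose (k + 1) : ℝ)) *
    ∫ t in (0 : ℝ)..1, g (x + (k + 1) * τ * t)
  have hsplit : (-1) ^ r * g x = (∫ t in (0 : ℝ)..1, (fwdDiff (t * τ))^[r] g x) - S :=
    eq_sub_of_add_eq (integral_fwdDiff_iter hg r x τ).symm
  have haverage : ‖∫ t in (0 : ℝ)..1, (fwdDiff (t * τ))^[r] g x‖ ≤ ω * |1 - 0| :=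
    intervalIntegral.norm_integral_le_of_norm_le_const fun t ht => by
      rw [Set.uIoc_of_le zero_le_one] at ht
      exact hω t ⟨ht.1.le, ht.2⟩
  have hS : |S| ≤ 2 ^ r * M := calc
    |S| ≤ ∑ k ∈ range r, (r.choose (k + 1) : ℝ) * M := by
        refine (abs_sum_le_sum_abs _ _).trans (sum_le_sum fun k hk => ?_)
        rw [abs_mul, abs_mul, abs_neg_one_pow, one_mul, Nat.abs_cast]
        exact mul_le_mul_of_nonneg_left (hint k (mem_range.mp hk)) (Nat.cast_nonneg _)
    _ ≤ ∑ k ∈ range (r + 1), (r.choose k : ℝ) * M := by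
        rw [sum_range_succ' _ r]
        exact le_add_of_nonneg_right (by positivity)
    _ = 2 ^ r * M := by
        rw [← sum_mul]
        exact_mod_cast congrArg (fun c : ℕ => (c : ℝ) * M) (Nat.sum_range_choose r)
  calc |g x| = |(-1) ^ r * g x| := by rw [abs_mul, abs_neg_one_pow, one_mul]
    _ ≤ |∫ t in (0 : ℝ)..1, (fwdDiff (t * τ))^[r] g x| + |S| := by rw [hsplit]; exact abs_sub _ _
    _ ≤ ω + 2 ^ r * M := by
        rw [sub_zero, abs_one, mul_one, Real.norm_eq_abs] at haverage
        exact add_le_add haverage hS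

lemma exists_step_mem_Icc {r : ℕ} (hr : r ≠ 0) {α β x : ℝ} (hx : x ∈ Set.Icc α β) :
    ∃ τ : ℝ, |τ| = (β - α) / r / 2 ∧ x + r * τ ∈ Set.Icc α β := by
  have : (0 : ℝ) < r := by positivity
  have hlen : 0 ≤ (β - α) / r / 2 := by
    have := sub_nonneg.mpr (hx.1.trans hx.2)
    positivity
  have hr_mul : r * ((β - α) / r / 2) = (β - α) / 2 := by field_simp
  rcases le_total x ((α + β) / 2) with hmid | hmid
  · exact ⟨_, abs_of_nonneg hlen, by linarith [hx.1, hx.2], by linarith⟩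
  · exact ⟨-((β - α) / r / 2), by rw [abs_neg, abs_of_nonneg hlen], by rw [mul_neg]; linarith,
      by rw [mul_neg]; linarith [hx.1, hx.2]⟩

lemma FwdDiffBdd.abs_le_of_abs_primitive_le {g Γ : ℝ → ℝ} {r : ℕ} {α β ω E : ℝ}
    (h : FwdDiffBdd r g α β ω) (hr : r ≠ 0) (hαβ : α < β) (hg : Continuous g)
    (hΓ : ∀ y, HasDerivAt Γ (g y) y) (hE : ∀ y ∈ Set.Icc α β, |Γ y| ≤ E * ((β - α) / r))
    {x : ℝ} (hx : x ∈ Set.Icc α β) : |g x| ≤ ω + 2 ^ r * (4 * E) := by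
  have hs : 0 < (β - α) / r / 2 := by
    have := sub_pos.mpr hαβ
    positivity
  obtain ⟨τ, hτ, hτx⟩ := exists_step_mem_Icc hr hx
  have hmean : ∀ k < r, |∫ t in (0 : ℝ)..1, g (x + (k + 1) * τ * t)| ≤ 4 * E := fun k hk => by
    have hk' : (k : ℝ) + 1 ∈ Set.Icc (0 : ℝ) r := ⟨by positivity, by exact_mod_cast hk⟩
    have hprod := abs_mul_abs_integral_comp_add_mul_le hg hΓ (hE x hx)
      (hE _ (add_mul_mem_Icc hx hτx hk'))
    rw [abs_mul, hτ, abs_of_nonneg hk'.1] at hprod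
    refine le_of_mul_le_mul_left ?_ hs
    calc (β - α) / r / 2 * |∫ t in (0 : ℝ)..1, g (x + (k + 1) * τ * t)|
        ≤ (k + 1) * ((β - α) / r / 2) * |∫ t in (0 : ℝ)..1, g (x + (k + 1) * τ * t)| := by
          gcongr
          exact le_mul_of_one_le_left hs.le (le_add_of_nonneg_left k.cast_nonneg)
      _ ≤ 2 * (E * ((β - α) / r)) := hprod
      _ = (β - α) / r / 2 * (4 * E) := by ring
  refine abs_le_of_abs_integral_le hg ((abs_nonneg _).trans (hmean 0 hr.bot_lt)) (fun t ht => ?_)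
    hmean
  refine h x _ hx ?_
  rw [← mul_assoc]
  exact add_mul_mem_Icc hx hτx ⟨mul_nonneg r.cast_nonneg ht.1,
    mul_le_of_le_one_right r.cast_nonneg ht.2⟩

lemma FwdDiffBdd.sub_eval {r : ℕ} {f : ℝ → ℝ} {α β ω : ℝ} (h : FwdDiffBdd r f α β ω) {P : ℝ[X]}
    (hP : P.natDegree < r) : FwdDiffBdd r (fun y => f y - P.eval y) α β ω := fun v s hv hvs => by
  rw [fwdDiff_iter_sub, fwdDiff_iter_eval_eq_zero hP, sub_zero]
  exact h v s hv hvs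

theorem exists_abs_sub_eval_le_of_fwdDiffBdd {r : ℕ} (hr : r ≠ 0) : ∃ K : ℝ, 0 ≤ K ∧
    ∀ (f : ℝ → ℝ) (α β ω : ℝ), Continuous f → α < β → FwdDiffBdd r f α β ω →
      ∃ P : ℝ[X], P.natDegree < r ∧ ∀ y ∈ Set.Icc α β, |f y - P.eval y| ≤ K * ω := by
  obtain ⟨K, hK, hinterp⟩ := exists_interpBdd r
  refine ⟨1 + 2 ^ r * (4 * K), by positivity, fun f α β ω hf hαβ h => ?_⟩
  obtain ⟨M, hM⟩ := exists_lipschitzOnWith_primitive hf α β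
  obtain ⟨P, hP, hnear⟩ := (hinterp _ α β ω M (h.nonneg hαβ.le) hM fun _ _ hc hcs =>
    h.abs_fwdDiff_iter_succ_primitive_le hf hc hcs).exists_polynomial hr hαβ
  have hdeg : P.derivative.natDegree < r := by have := natDegree_derivative_le P; omega
  refine ⟨P.derivative, hdeg, fun x hx => ?_⟩
  have hderiv : ∀ y, HasDerivAt (fun y => (∫ t in α..y, f t) - P.eval y)
      (f y - P.derivative.eval y) y := fun y =>
    ((hf.integral_hasStrictDerivAt α y).hasDerivAt).sub (P.hasDerivAt y)
  exact ((h.sub_eval hdeg).abs_le_of_abs_primitive_le hr hαβ (hf.sub P.derivative.continuous)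
    hderiv hnear hx).trans_eq (by ring)

end Whitney

section QuadraticGrid

open Polynomial Finset

/-! ### Piecewise polynomials on a quadratic grid -/

/-- The quadratic grid `(i / N)²`. Its spacing near `x` is comparable with `√x / N + 1 / N²`, the
natural scale of the weighted modulus near the endpoint `0`. -/
noncomputable def gridPt (N i : ℕ) : ℝ := ((i : ℝ) / N) ^ 2

/-- The index `i` of the cell `[gridPt N i, gridPt N (i + 1))` containing `y`. -/
noncomputable def gridIndex (N : ℕ) (y : ℝ) : ℕ := ⌊N * √y⌋₊

lemma gridPt_nonneg (N i : ℕ) : 0 ≤ gridPt N i := sq_nonneg _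

lemma gridPt_mono (N : ℕ) : Monotone (gridPt N) := fun i j h => by
  unfold gridPt
  gcongr

lemma gridPt_add (N i k : ℕ) : gridPt N (i + k) = gridPt N i + (2 * i * k + k ^ 2) / N ^ 2 := by
  rw [gridPt, gridPt, div_pow, div_pow, ← add_div]
  push_cast
  ring

lemma natCast_le_of_gridPt_le_one {N i : ℕ} (hN : 0 < N) (hi : gridPt N i ≤ 1) : (i : ℝ) ≤ N := by
  have hN' : (0 : ℝ) < N := Nat.cast_pos.mpr hN
  rwa [gridPt, sq_le_one_iff₀ (by positivity), div_le_one hN'] at hi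

lemma gridIndex_mono (N : ℕ) : Monotone (gridIndex N) := fun _ _ h =>
  Nat.floor_mono (mul_le_mul_of_nonneg_left (Real.sqrt_le_sqrt h) N.cast_nonneg)

lemma mem_Icc_gridPt_gridIndex {N : ℕ} (hN : 0 < N) {y : ℝ} (hy : 0 ≤ y) :
    y ∈ Set.Icc (gridPt N (gridIndex N y)) (gridPt N (gridIndex N y + 1)) := by
  have hN' : (0 : ℝ) < N := Nat.cast_pos.mpr hN
  have hlower : (gridIndex N y : ℝ) ≤ N * √y := Nat.floor_le (by positivity)
  have hupper : N * √y ≤ (gridIndex N y + 1 : ℕ) := by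
    exact_mod_cast (Nat.lt_floor_add_one (N * √y)).le
  constructor
  · rw [gridPt, ← Real.le_sqrt (by positivity) hy, div_le_iff₀ hN']
    linarith
  · rw [gridPt, ← Real.sqrt_le_left (by positivity), le_div_iff₀ hN']
    linarith

lemma natCast_le_two_mul_gridIndex_half_add_three {N : ℕ} (hN : 0 < N) :
    (N : ℝ) ≤ 2 * gridIndex N (1 / 2) + 3 := by
  have : (0 : ℝ) < N := Nat.cast_pos.mpr hN
  have hhalf := (mem_Icc_gridPt_gridIndex hN (one_half_pos (α := ℝ)).le).2
  rw [gridPt, div_pow, le_div_iff₀ (by positivity)] at hhalf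
  push_cast at hhalf
  nlinarith [((gridIndex N (1 / 2)).cast_nonneg : (0 : ℝ) ≤ gridIndex N (1 / 2))]

lemma abs_gridIndex_sub_gridIndex_le (N : ℕ) (x y : ℝ) :
    |(gridIndex N y : ℝ) - gridIndex N x| ≤ 1 + N * |√y - √x| := by
  have hfloor (z : ℝ) : (gridIndex N z : ℝ) ≤ N * √z ∧ N * √z < gridIndex N z + 1 :=
    ⟨Nat.floor_le (by positivity), Nat.lt_floor_add_one _⟩
  have hscale : N * |√y - √x| = |N * √y - N * √x| := by
    rw [← mul_sub, abs_mul, Nat.abs_cast]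
  have hle := le_abs_self (N * √y - N * √x)
  have hge := neg_abs_le (N * √y - N * √x)
  rw [hscale, abs_le]
  constructor <;> linarith [hfloor x, hfloor y]

lemma abs_sub_gridPt_le {N a b i : ℕ} (hi : i ∈ Ico (min a b) (max a b)) {y : ℝ}
    (hy : y ∈ Set.Icc (gridPt N b) (gridPt N (b + 1))) :
    |y - gridPt N (i + 1)| ≤ (|(b : ℝ) - a| + 1) ^ 2 * ((2 * i + 3) / N ^ 2) := by
  set D := |(b : ℝ) - a| with hD
  have hi0 : (0 : ℝ) ≤ i := i.cast_nonneg
  rw [mem_Ico] at hi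
  rw [mul_div_assoc']
  rcases lt_or_ge i b with hib | hbi
  · obtain ⟨k, rfl⟩ := Nat.exists_eq_add_of_lt hib
    have hk : (k : ℝ) + 1 ≤ D := by
      have hai : (a : ℝ) ≤ i := by exact_mod_cast (by omega : a ≤ i)
      rw [hD]
      push_cast
      linarith [le_abs_self ((i : ℝ) + k + 1 - a)]
    have hcell := gridPt_add N (i + 1) (k + 1)
    rw [show i + 1 + (k + 1) = i + k + 1 + 1 by ring] at hcell
    have hleft : gridPt N (i + 1) ≤ y := (gridPt_mono N (by omega)).trans hy.1
    rw [abs_of_nonneg (sub_nonneg.mpr hleft), sub_le_iff_le_add']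
    refine hy.2.trans (hcell.trans_le ?_)
    push_cast
    gcongr
    have hsq : ((k : ℝ) + 1) ^ 2 ≤ (D + 1) ^ 2 := by gcongr; linarith
    nlinarith [mul_le_mul_of_nonneg_right hsq (by positivity : (0 : ℝ) ≤ 2 * i + 3),
      mul_nonneg (k.cast_nonneg : (0 : ℝ) ≤ k) hi0]
  · obtain ⟨k, rfl⟩ := Nat.exists_eq_add_of_le hbi
    have hk : (k : ℝ) + 1 ≤ D := by
      have hba : (b : ℝ) + k + 1 ≤ a := by exact_mod_cast (by omega : b + k + 1 ≤ a)
      rw [hD]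
      linarith [neg_abs_le ((b : ℝ) - a)]
    have hcell := gridPt_add N b (k + 1)
    rw [← add_assoc] at hcell
    have hright : y ≤ gridPt N (b + k + 1) := hy.2.trans (gridPt_mono N (by omega))
    rw [abs_of_nonpos (sub_nonpos.mpr hright), neg_sub, sub_le_iff_le_add', hcell]
    refine add_le_add hy.1 ?_
    push_cast
    gcongr
    have hsq : (k : ℝ) + 1 ≤ (D + 1) ^ 2 := by nlinarith
    nlinarith [mul_le_mul_of_nonneg_right hsq (by positivity : (0 : ℝ) ≤ 2 * (b + k) + 3)]

lemma abs_sub_le_of_abs_succ_sub_le {T : ℕ → ℝ} {a b : ℕ} {B : ℝ}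
    (h : ∀ i ∈ Ico (min a b) (max a b), |T (i + 1) - T i| ≤ B) :
    |T b - T a| ≤ |(b : ℝ) - a| * B := by
  wlog hab : a ≤ b generalizing a b
  · rw [abs_sub_comm, abs_sub_comm (b : ℝ)]
    exact this (by rwa [min_comm, max_comm]) (le_of_not_ge hab)
  rw [min_eq_left hab, max_eq_right hab] at h
  have hdist := dist_le_Ico_sum_of_dist_le (f := T) (d := fun _ => B) hab fun {i} hai hib => by
    rw [dist_comm]
    exact h i (mem_Ico.mpr ⟨hai, hib⟩)
  rw [dist_comm, Real.dist_eq, sum_const, Nat.card_Ico, nsmul_eq_mul, Nat.cast_sub hab] at hdist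
  exact hdist.trans_eq (by rw [abs_of_nonneg (sub_nonneg.mpr (Nat.cast_le.mpr hab))])

/-- The polynomials `P i` have degree less than `r` and approximate `f` up to `W` on pairs of
consecutive cells of the quadratic grid of size `N`, and `f` is bounded by `F`. The cells stay away
from the endpoint `1`, where the grid does not follow the weight. -/
structure GridApprox (r N : ℕ) (f : ℝ → ℝ) (P : ℕ → ℝ[X]) (F W : ℝ) : Prop where
  hundred_le : 100 ≤ N
  natDegree_lt : ∀ i, (P i).natDegree < r
  abs_sub_eval_le : ∀ i, gridPt N i ≤ 3 / 4 →
    ∀ y ∈ Set.Icc (gridPt N i) (gridPt N (i + 2)), |f y - (P i).eval y| ≤ W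
  abs_apply_le : ∀ y ∈ Set.Icc (0 : ℝ) 1, |f y| ≤ F

lemma gridPt_add_two_le {N i : ℕ} (hN : 100 ≤ N) (hi : gridPt N i ≤ 3 / 4) :
    gridPt N (i + 2) ≤ 4 / 5 := by
  have hN' : (100 : ℝ) ≤ N := by exact_mod_cast hN
  have hstep : 2 / (N : ℝ) ≤ 1 / 50 := by
    rw [div_le_div_iff₀ (by linarith) (by norm_num)]
    linarith
  have hstep0 : 0 ≤ 2 / (N : ℝ) := by positivity
  rw [gridPt] at hi
  have hle : (i : ℝ) / N ≤ 1 := by nlinarith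
  have hsplit : gridPt N (i + 2) = (i / N + 2 / N) ^ 2 := by
    rw [gridPt, ← add_div]
    push_cast
    rfl
  rw [hsplit]
  nlinarith [(by positivity : (0 : ℝ) ≤ i / N)]

namespace GridApprox

variable {r N : ℕ} {f : ℝ → ℝ} {P : ℕ → ℝ[X]} {F W : ℝ}

lemma pos (H : GridApprox r N f P F W) : 0 < N := H.hundred_le.trans_lt' (by norm_num)

lemma one_le_cast (H : GridApprox r N f P F W) : (1 : ℝ) ≤ N := Nat.one_le_cast.mpr H.pos

lemma bound_nonneg (H : GridApprox r N f P F W) : 0 ≤ F :=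
  (abs_nonneg _).trans (H.abs_apply_le 0 (by simp))

lemma error_nonneg (H : GridApprox r N f P F W) : 0 ≤ W :=
  (abs_nonneg _).trans (H.abs_sub_eval_le 0 (by norm_num [gridPt]) (gridPt N 0)
    ⟨le_rfl, gridPt_mono N (by omega)⟩)

lemma natDegree_le (H : GridApprox r N f P F W) (i : ℕ) : (P i).natDegree ≤ r - 1 :=
  Nat.le_sub_one_of_lt (H.natDegree_lt i)

lemma sub_one_add_one (H : GridApprox r N f P F W) : r - 1 + 1 = r :=
  Nat.sub_add_cancel (Nat.one_le_of_lt (H.natDegree_lt 0))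

lemma mem_Icc_gridIndex (H : GridApprox r N f P F W) {y : ℝ} (hy : 0 ≤ y) :
    y ∈ Set.Icc (gridPt N (gridIndex N y)) (gridPt N (gridIndex N y + 1)) :=
  mem_Icc_gridPt_gridIndex H.pos hy

lemma abs_sub_eval_gridIndex_le (H : GridApprox r N f P F W) {y : ℝ}
    (hy : y ∈ Set.Icc (0 : ℝ) (3 / 4)) : |f y - (P (gridIndex N y)).eval y| ≤ W := by
  have hcell := H.mem_Icc_gridIndex hy.1
  exact H.abs_sub_eval_le _ (hcell.1.trans hy.2) y
    ⟨hcell.1, hcell.2.trans (gridPt_mono N (by omega))⟩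

lemma gridPt_gridIndex_le (H : GridApprox r N f P F W) {y c : ℝ} (hy : 0 ≤ y) (hyc : y ≤ c) :
    gridPt N (gridIndex N y) ≤ c :=
  (H.mem_Icc_gridIndex hy).1.trans hyc

lemma exists_abs_hasseDeriv_succ_sub_le (r : ℕ) : ∃ K : ℝ, 0 ≤ K ∧
    ∀ {N : ℕ} {f : ℝ → ℝ} {P : ℕ → ℝ[X]} {F W : ℝ}, GridApprox r N f P F W →
      ∀ (i : ℕ) (Q z : ℝ), gridPt N (i + 1) ≤ 3 / 4 → 1 ≤ Q →
        |z - gridPt N (i + 1)| ≤ Q * ((2 * i + 3) / N ^ 2) → ∀ j,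
          |(hasseDeriv j (P (i + 1))).eval z - (hasseDeriv j (P i)).eval z| ≤
            K * W * Q ^ (r - 1 - j) / ((2 * i + 3) / N ^ 2) ^ j := by
  obtain ⟨K, hK, hbound⟩ := exists_abs_eval_hasseDeriv_le (r - 1)
  refine ⟨K * 2, by positivity, fun {N f P F W} H i Q z hi hQ hz j => ?_⟩
  have hN := zero_lt_one.trans_le H.one_le_cast
  have hcell : gridPt N (i + 1) + (2 * i + 3) / N ^ 2 = gridPt N (i + 2) := by
    rw [show i + 2 = i + 1 + 1 by ring, gridPt_add N (i + 1) 1]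
    push_cast
    ring
  have hdiff : ∀ y ∈ Set.Icc (gridPt N (i + 1)) (gridPt N (i + 1) + (2 * i + 3) / N ^ 2),
      |(P (i + 1) - P i).eval y| ≤ 2 * W := fun y hy => by
    rw [hcell] at hy
    have hP := H.abs_sub_eval_le i ((gridPt_mono N (by omega)).trans hi) y
      ⟨(gridPt_mono N (by omega)).trans hy.1, hy.2⟩
    have hP' := H.abs_sub_eval_le (i + 1) hi y ⟨hy.1, hy.2.trans (gridPt_mono N (by omega))⟩
    rw [eval_sub, ← sub_sub_sub_cancel_left _ _ (f y), two_mul]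
    exact (abs_sub _ _).trans (add_le_add hP hP')
  have hderiv := hbound (P (i + 1) - P i) _ _ _ Q z
    ((natDegree_sub_le _ _).trans (max_le (H.natDegree_le _) (H.natDegree_le _)))
    (by positivity) hdiff hQ hz j
  rw [map_sub, eval_sub] at hderiv
  exact hderiv.trans_eq (by ring)

lemma exists_abs_eval_sub_eval_le (r : ℕ) : ∃ K : ℝ, 0 ≤ K ∧
    ∀ {N : ℕ} {f : ℝ → ℝ} {P : ℕ → ℝ[X]} {F W : ℝ}, GridApprox r N f P F W →
      ∀ (a b : ℕ) (Q y : ℝ), gridPt N a ≤ 3 / 4 → gridPt N b ≤ 3 / 4 → 1 ≤ Q →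
        |(b : ℝ) - a| ≤ Q →
        (∀ i ∈ Ico (min a b) (max a b), |y - gridPt N (i + 1)| ≤ Q * ((2 * i + 3) / N ^ 2)) →
          |(P b).eval y - (P a).eval y| ≤ K * W * Q ^ r := by
  obtain ⟨K, hK, hsucc⟩ := exists_abs_hasseDeriv_succ_sub_le r
  refine ⟨K, hK, fun {N f P F W} H a b Q y ha hb hQ hab hy => ?_⟩
  have hW := H.error_nonneg
  have hmax : gridPt N (max a b) ≤ 3 / 4 := by
    rw [(gridPt_mono N).map_max]
    exact max_le ha hb
  have hstep : ∀ i ∈ Ico (min a b) (max a b),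
      |(P (i + 1)).eval y - (P i).eval y| ≤ K * W * Q ^ (r - 1) := fun i hi => by
    simpa using hsucc H i Q y ((gridPt_mono N (mem_Ico.mp hi).2).trans hmax) hQ (hy i hi) 0
  calc |(P b).eval y - (P a).eval y| ≤ |(b : ℝ) - a| * (K * W * Q ^ (r - 1)) :=
        abs_sub_le_of_abs_succ_sub_le (T := fun i => (P i).eval y) hstep
    _ ≤ Q * (K * W * Q ^ (r - 1)) := by gcongr
    _ = K * W * Q ^ (r - 1 + 1) := by ring
    _ = K * W * Q ^ r := by rw [H.sub_one_add_one]

lemma exists_abs_sub_eval_le_pow (r : ℕ) : ∃ K : ℝ, 0 ≤ K ∧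
    ∀ {N : ℕ} {f : ℝ → ℝ} {P : ℕ → ℝ[X]} {F W : ℝ}, GridApprox r N f P F W →
      ∀ a : ℕ, gridPt N a ≤ 3 / 4 → ∀ y ∈ Set.Icc (0 : ℝ) (3 / 4),
        |f y - (P a).eval y| ≤ K * W * (|(gridIndex N y : ℝ) - a| + 1) ^ (2 * r) := by
  obtain ⟨K, hK, hsub⟩ := exists_abs_eval_sub_eval_le r
  refine ⟨1 + K, by positivity, fun {N f P F W} H a ha y hy => ?_⟩
  have hW := H.error_nonneg
  set D := |(gridIndex N y : ℝ) - a|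
  have hD : 0 ≤ D := abs_nonneg _
  have hlocal := H.abs_sub_eval_gridIndex_le hy
  have hpoly := hsub H a (gridIndex N y) ((D + 1) ^ 2) y ha (H.gridPt_gridIndex_le hy.1 hy.2)
    (one_le_pow₀ (by linarith)) (by change D ≤ _; nlinarith)
    (fun i hi => abs_sub_gridPt_le hi (H.mem_Icc_gridIndex hy.1))
  have hpow : (1 : ℝ) ≤ (D + 1) ^ (2 * r) := one_le_pow₀ (by linarith)
  calc |f y - (P a).eval y|
      = |(f y - (P (gridIndex N y)).eval y) + ((P (gridIndex N y)).eval y - (P a).eval y)| := by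
        rw [sub_add_sub_cancel]
    _ ≤ W * 1 + K * W * ((D + 1) ^ 2) ^ r :=
        (abs_add_le _ _).trans (add_le_add (hlocal.trans_eq (mul_one W).symm) hpoly)
    _ ≤ W * (D + 1) ^ (2 * r) + K * W * (D + 1) ^ (2 * r) := by rw [← pow_mul]; gcongr
    _ = (1 + K) * W * (D + 1) ^ (2 * r) := by ring

lemma exists_abs_sub_eval_le_global (r : ℕ) : ∃ K : ℝ, 0 ≤ K ∧
    ∀ {N : ℕ} {f : ℝ → ℝ} {P : ℕ → ℝ[X]} {F W : ℝ}, GridApprox r N f P F W →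
      ∀ a : ℕ, gridPt N a ≤ 3 / 4 → ∀ y ∈ Set.Icc (0 : ℝ) 1,
        |f y - (P a).eval y| ≤ K * (F + W) * N ^ (2 * r) := by
  obtain ⟨K, hK, hbound⟩ := exists_abs_eval_hasseDeriv_le (r - 1)
  refine ⟨1 + K, by positivity, fun {N f P F W} H a ha y hy => ?_⟩
  have hF := H.bound_nonneg
  have hW := H.error_nonneg
  have hN := H.one_le_cast
  have := zero_lt_one.trans_le hN
  have hcell : gridPt N a + (4 * a + 4) / N ^ 2 = gridPt N (a + 2) := by
    rw [gridPt_add]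
    push_cast
    ring
  have hcell_le : gridPt N (a + 2) ≤ 1 := (gridPt_add_two_le H.hundred_le ha).trans (by norm_num)
  have hcell_bound : ∀ z ∈ Set.Icc (gridPt N a) (gridPt N a + (4 * a + 4) / N ^ 2),
      |(P a).eval z| ≤ F + W := fun z hz => by
    rw [hcell] at hz
    rw [← sub_sub_cancel (f z) ((P a).eval z)]
    exact (abs_sub _ _).trans (add_le_add
      (H.abs_apply_le z ⟨(gridPt_nonneg N a).trans hz.1, hz.2.trans hcell_le⟩)
      (H.abs_sub_eval_le a ha z hz))
  have hy_dist : |y - gridPt N a| ≤ N ^ 2 * ((4 * a + 4) / N ^ 2) := by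
    rw [mul_div_cancel₀ _ (by positivity), abs_le]
    have := gridPt_nonneg N a
    constructor <;> linarith [hy.1, hy.2, (a.cast_nonneg : (0 : ℝ) ≤ a)]
  have hP := hbound (P a) _ _ _ (N ^ 2) y (H.natDegree_le a) (by positivity) hcell_bound
    (one_le_pow₀ hN) hy_dist 0
  simp only [hasseDeriv_zero', Nat.sub_zero, pow_zero, div_one, ← pow_mul] at hP
  calc |f y - (P a).eval y| ≤ F + K * (F + W) * N ^ (2 * (r - 1)) :=
        (abs_sub _ _).trans (add_le_add (H.abs_apply_le y hy) hP)
    _ ≤ (F + W) * N ^ (2 * r) + K * (F + W) * N ^ (2 * r) := by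
        gcongr
        · exact (le_add_of_nonneg_right hW).trans
            (le_mul_of_one_le_right (by positivity) (one_le_pow₀ hN))
        · exact Nat.sub_le r 1
    _ = (1 + K) * (F + W) * N ^ (2 * r) := by ring

end GridApprox

end QuadraticGrid

section BootstrapOfGridApprox

open Polynomial Finset

/-! ### The bootstrap bias of a piecewise approximated function -/

lemma regVar_le_add (n : ℕ) {x : ℝ} (hx : 0 ≤ x) : regVar n x ≤ x + 1 / n :=
  max_le (by nlinarith [(by positivity : (0 : ℝ) ≤ 1 / n)]) (le_add_of_nonneg_left hx)

lemma mul_pow_mul_regStd_pow_le {n : ℕ} (hn : 0 < n) (r m : ℕ) {A x : ℝ} (hA : 0 ≤ A)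
    (hx : x ∈ Set.Icc (0 : ℝ) 1) :
    A * n ^ r * regStd n x ^ (2 * (r + m)) ≤ A / n ^ m := by
  have hηn := regStd_sq_le_one_div n hx
  calc A * n ^ r * regStd n x ^ (2 * (r + m)) ≤ A * n ^ r * (1 / n : ℝ) ^ (r + m) := by
        rw [pow_mul]
        gcongr
    _ = A / n ^ m := by
        rw [pow_add, one_div_pow, one_div_pow]
        field_simp

lemma mul_abs_sqrt_sub_sqrt_le {n : ℕ} (hn : 0 < n) {N C x y : ℝ} (hC : 0 ≤ C)
    (hNn : N ^ 2 ≤ C * n) (hx : 0 ≤ x) (hy : 0 ≤ y) :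
    N * |√y - √x| ≤ 1 + (1 + C) * (|y - x| / regStd n x) := by
  have hη := regStd_pos hn x
  have hη2 := regStd_sq n x
  have : (0 : ℝ) < n := Nat.cast_pos.mpr hn
  set η := regStd n x
  set v := N * |√y - √x| with hv
  rcases le_or_gt v 1 with hv1 | hv1
  · exact hv1.trans (le_add_of_nonneg_right (by positivity))
  refine le_add_of_nonneg_of_le zero_le_one ?_
  rw [mul_div_assoc', le_div_iff₀ hη]
  refine le_of_sq_le_sq ?_ (by positivity)
  have hsx := Real.sqrt_nonneg x
  have hsy := Real.sqrt_nonneg y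
  have hfac : (y - x) ^ 2 = (√y - √x) ^ 2 * (√y + √x) ^ 2 := by
    rw [← mul_pow, mul_comm (√y - √x), ← sq_sub_sq, Real.sq_sqrt hx, Real.sq_sqrt hy]
  have hv2 : v ^ 2 = N ^ 2 * (√y - √x) ^ 2 := by rw [hv, mul_pow, sq_abs]
  have hlarge : v ^ 2 * x ≤ C * n * (y - x) ^ 2 := by
    refine le_trans ?_ (mul_le_mul_of_nonneg_right hNn (sq_nonneg _))
    rw [hv2, hfac, mul_assoc]
    gcongr
    nlinarith [Real.sq_sqrt hx, mul_nonneg hsx hsy, sq_nonneg √y]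
  have hsmall : v ^ 2 ≤ C ^ 2 * n ^ 2 * (y - x) ^ 2 := calc
    v ^ 2 ≤ (v ^ 2) ^ 2 := le_self_pow₀ (one_le_pow₀ hv1.le) two_ne_zero
    _ = (N ^ 2) ^ 2 * ((√y - √x) ^ 2 * (√y - √x) ^ 2) := by rw [hv2]; ring
    _ ≤ (C * n) ^ 2 * ((√y - √x) ^ 2 * (√y + √x) ^ 2) := by
        gcongr ?_ ^ 2 * (_ * ?_)
        nlinarith [mul_nonneg hsx hsy]
    _ = C ^ 2 * n ^ 2 * (y - x) ^ 2 := by rw [hfac]; ring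
  calc (v * η) ^ 2 = v ^ 2 * (regVar n x / n) := by rw [mul_pow, hη2]
    _ ≤ v ^ 2 * ((x + 1 / n) / n) := by gcongr; exact regVar_le_add n hx
    _ = v ^ 2 * x / n + v ^ 2 / n ^ 2 := by field_simp
    _ ≤ C * n * (y - x) ^ 2 / n + C ^ 2 * n ^ 2 * (y - x) ^ 2 / n ^ 2 := by gcongr
    _ = (C + C ^ 2) * (y - x) ^ 2 := by field_simp
    _ ≤ (1 + C) ^ 2 * (y - x) ^ 2 := by gcongr; nlinarith
    _ = ((1 + C) * |y - x|) ^ 2 := by rw [mul_pow, sq_abs]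

namespace GridApprox

lemma pos_of_sq_le {r N n : ℕ} {f : ℝ → ℝ} {P : ℕ → ℝ[X]} {F W C : ℝ}
    (H : GridApprox r N f P F W) (hNn : (N : ℝ) ^ 2 ≤ C * n) : 0 < n := by
  rcases n.eq_zero_or_pos with rfl | hn
  · have := pow_pos (zero_lt_one.trans_le H.one_le_cast) 2
    simp only [Nat.cast_zero, mul_zero] at hNn
    exact absurd hNn this.not_ge
  · exact hn

lemma exists_abs_sub_eval_le_near (r : ℕ) {C : ℝ} (hC : 0 ≤ C) : ∃ K : ℝ, 0 ≤ K ∧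
    ∀ {N n : ℕ} {f : ℝ → ℝ} {P : ℕ → ℝ[X]} {F W : ℝ}, GridApprox r N f P F W →
      (N : ℝ) ^ 2 ≤ C * n → ∀ x ∈ Set.Icc (0 : ℝ) (3 / 4), ∀ y ∈ Set.Icc (0 : ℝ) (3 / 4),
        |f y - (P (gridIndex N x)).eval y| ≤
          K * W * (1 + (|y - x| / regStd n x) ^ (2 * r)) := by
  obtain ⟨K, hK, hpow⟩ := exists_abs_sub_eval_le_pow r
  refine ⟨K * ((3 + C) ^ (2 * r) * 2 ^ (2 * r - 1)), by positivity,
    fun {N n f P F W} H hNn x hx y hy => ?_⟩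
  have hW := H.error_nonneg
  have hindex := abs_gridIndex_sub_gridIndex_le N x y
  have hscale := mul_abs_sqrt_sub_sqrt_le (H.pos_of_sq_le hNn) hC hNn hx.1 hy.1
  have hη := regStd_nonneg n x
  set w := |y - x| / regStd n x
  have hw : 0 ≤ w := by positivity
  calc |f y - (P (gridIndex N x)).eval y|
      ≤ K * W * (|(gridIndex N y : ℝ) - gridIndex N x| + 1) ^ (2 * r) :=
        hpow H _ (H.gridPt_gridIndex_le hx.1 hx.2) y hy
    _ ≤ K * W * ((3 + C) * (1 + w)) ^ (2 * r) := by gcongr; nlinarith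
    _ = K * W * ((3 + C) ^ (2 * r) * (1 + w) ^ (2 * r)) := by rw [mul_pow]
    _ ≤ K * W * ((3 + C) ^ (2 * r) * (2 ^ (2 * r - 1) * (1 + w ^ (2 * r)))) := by
        gcongr
        simpa using add_pow_le zero_le_one hw (2 * r)
    _ = K * ((3 + C) ^ (2 * r) * 2 ^ (2 * r - 1)) * W * (1 + w ^ (2 * r)) := by ring

lemma exists_abs_sub_eval_le_sum (r p : ℕ) {C : ℝ} (hC : 0 ≤ C) : ∃ K : ℝ, 0 ≤ K ∧
    ∀ {N n : ℕ} {f : ℝ → ℝ} {P : ℕ → ℝ[X]} {F W : ℝ}, GridApprox r N f P F W →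
      (N : ℝ) ^ 2 ≤ C * n → ∀ x ∈ Set.Icc (0 : ℝ) (1 / 2), ∀ y ∈ Set.Icc (0 : ℝ) 1,
        |f y - (P (gridIndex N x)).eval y| ≤
          K * (W + W / regStd n x ^ (2 * r) * (y - x) ^ (2 * r) +
            (F + W) * n ^ r * (y - x) ^ (2 * p)) := by
  obtain ⟨K₁, hK₁, hnear⟩ := exists_abs_sub_eval_le_near r hC
  obtain ⟨K₂, hK₂, hfar⟩ := exists_abs_sub_eval_le_global r
  refine ⟨K₁ + K₂ * (C ^ r * 4 ^ (2 * p)), by positivity, fun {N n f P F W} H hNn x hx y hy => ?_⟩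
  have hF := H.bound_nonneg
  have hW := H.error_nonneg
  have hη := regStd_nonneg n x
  have hx' : x ∈ Set.Icc (0 : ℝ) (3 / 4) := ⟨hx.1, hx.2.trans (by norm_num)⟩
  have hevenr := (even_two_mul r).pow_nonneg (y - x)
  have hevenp := (even_two_mul p).pow_nonneg (y - x)
  set A := W + W / regStd n x ^ (2 * r) * (y - x) ^ (2 * r)
  set B := (F + W) * n ^ r * (y - x) ^ (2 * p)
  have hA : 0 ≤ A := by positivity
  have hB : 0 ≤ B := by positivity
  rcases le_total y (3 / 4) with hy' | hy'
  · refine (hnear H hNn x hx' y ⟨hy.1, hy'⟩).trans ?_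
    calc K₁ * W * (1 + (|y - x| / regStd n x) ^ (2 * r)) = K₁ * A := by
          rw [div_pow, (even_two_mul r).pow_abs]
          ring
      _ ≤ (K₁ + K₂ * (C ^ r * 4 ^ (2 * p))) * (A + B) := by
          gcongr
          · exact le_add_of_nonneg_right (by positivity)
          · exact le_add_of_nonneg_right hB
  · refine (hfar H _ (H.gridPt_gridIndex_le hx'.1 hx'.2) y hy).trans ?_
    have hdist : (1 : ℝ) ≤ (4 * (y - x)) ^ (2 * p) := one_le_pow₀ (by linarith [hx.2])
    calc K₂ * (F + W) * (N : ℝ) ^ (2 * r) ≤ K₂ * (F + W) * (C * n) ^ r := by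
          rw [pow_mul]
          gcongr
      _ ≤ K₂ * (F + W) * (C * n) ^ r * (4 * (y - x)) ^ (2 * p) :=
          le_mul_of_one_le_right (by positivity) hdist
      _ = K₂ * (C ^ r * 4 ^ (2 * p)) * B := by rw [mul_pow, mul_pow]; ring
      _ ≤ (K₁ + K₂ * (C ^ r * 4 ^ (2 * p))) * (A + B) := by
          gcongr
          · exact le_add_of_nonneg_left hK₁
          · exact le_add_of_nonneg_left hA

lemma exists_abs_bootIter_sub_eval_le (r m : ℕ) {C : ℝ} (hC : 0 ≤ C) : ∃ K : ℝ, 0 ≤ K ∧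
    ∀ {N n : ℕ} {f : ℝ → ℝ} {P : ℕ → ℝ[X]} {F W : ℝ}, GridApprox r N f P F W →
      (N : ℝ) ^ 2 ≤ C * n → ∀ x ∈ Set.Icc (0 : ℝ) (1 / 2),
        |bootIter n (fun y => f y - (P (gridIndex N x)).eval y) m x| ≤ K * (W + F / n ^ m) := by
  obtain ⟨K₁, hK₁, hgrowth⟩ := exists_abs_sub_eval_le_sum r (r + m) hC
  obtain ⟨K₂, hK₂, hboot⟩ := exists_abs_bootIter_le_sum m ![0, 2 * r, 2 * (r + m)]
  refine ⟨K₂ * (K₁ * 3), by positivity, fun {N n f P F W} H hNn x hx => ?_⟩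
  have hF := H.bound_nonneg
  have hW := H.error_nonneg
  have hn := H.pos_of_sq_le hNn
  have hx1 : x ∈ Set.Icc (0 : ℝ) 1 := ⟨hx.1, hx.2.trans (by norm_num)⟩
  have hη := regStd_pos hn x
  have hlast := mul_pow_mul_regStd_pow_le hn r m (add_nonneg hF hW) hx1
  have hWn : W / n ^ m ≤ W := div_le_self hW (one_le_pow₀ (Nat.one_le_cast.mpr hn))
  set η := regStd n x
  have hmain := hboot n hn (fun y => f y - (P (gridIndex N x)).eval y) x
    ![K₁ * W, K₁ * (W / η ^ (2 * r)), K₁ * ((F + W) * n ^ r)] hx1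
    (by
      simp only [Fin.forall_fin_succ, Matrix.cons_val_zero, Matrix.cons_val_succ]
      exact ⟨by positivity, by positivity, by positivity, fun i => i.elim0⟩)
    (fun y hy => (hgrowth H hNn x hx y hy).trans_eq (by simp [Fin.sum_univ_three]; ring))
  refine hmain.trans ?_
  rw [mul_assoc K₂]
  gcongr
  simp only [Fin.sum_univ_three, Matrix.cons_val_zero, Matrix.cons_val_one, Matrix.cons_val,
    pow_zero]
  calc K₁ * W * 1 + K₁ * (W / η ^ (2 * r)) * η ^ (2 * r) +
        K₁ * ((F + W) * n ^ r) * η ^ (2 * (r + m))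
      = K₁ * (2 * W + (F + W) * n ^ r * η ^ (2 * (r + m))) := by field_simp; ring
    _ ≤ K₁ * (3 * (W + F / n ^ m)) := by
        gcongr
        rw [add_div] at hlast
        linarith [(by positivity : 0 ≤ F / (n : ℝ) ^ m)]
    _ = K₁ * 3 * (W + F / n ^ m) := by ring

end GridApprox

end BootstrapOfGridApprox

section BootstrapOfLocalPolynomial

open Polynomial Finset

/-! ### The bootstrap bias of the local polynomials -/

lemma exists_abs_eval_one_sub_bernsteinMap_pow_apply_le (m J : ℕ) : ∃ A : ℝ, 0 ≤ A ∧
    ∀ n : ℕ, 0 < n → ∀ x ∈ Set.Icc (0 : ℝ) 1, ∀ (q : ℝ[X]) (B : ℝ), q.natDegree ≤ J →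
      (∀ j ≤ J, |(hasseDeriv j q).eval x| *
        ((1 / (n : ℝ)) ^ (m + 1) * regVar n x ^ max (j - (m + 1)) 1) ≤ B) →
      |(((1 - bernsteinMap n) ^ (m + 1) : Module.End ℝ ℝ[X]) q).eval x| ≤ A * B := by
  choose A hA0 hA using exists_abs_eval_one_sub_bernsteinMap_pow_le m
  refine ⟨∑ j ∈ range (J + 1), A j, sum_nonneg fun j _ => hA0 j, fun n hn x hx q B hq hB => ?_⟩
  have htaylor : q = ∑ j ∈ range (J + 1), (hasseDeriv j q).eval x • (X - C x) ^ j :=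
    Polynomial.funext fun y => by
      rw [eval_eq_sum_hasseDeriv hq x y, eval_finsetSum]
      simp
  rw [htaylor, map_sum, eval_finsetSum, sum_mul]
  refine (abs_sum_le_sum_abs _ _).trans (sum_le_sum fun j hj => ?_)
  rw [map_smul, eval_smul, smul_eq_mul, abs_mul]
  calc _ ≤ |(hasseDeriv j q).eval x| *
        (A j * ((1 / (n : ℝ)) ^ (m + 1) * regVar n x ^ max (j - (m + 1)) 1)) := by
        gcongr
        exact hA j n hn x hx
    _ = A j * (|(hasseDeriv j q).eval x| *
        ((1 / (n : ℝ)) ^ (m + 1) * regVar n x ^ max (j - (m + 1)) 1)) := by ring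
    _ ≤ A j * B := mul_le_mul_of_nonneg_left (hB j (mem_range_succ_iff.mp hj)) (hA0 j)

lemma sum_Ico_sq_div_cube_le {a b : ℕ} (h : a ≤ b) :
    ∑ l ∈ Ico a b, ((a : ℝ) + 1) ^ 2 / ((l : ℝ) + 1) ^ 3 ≤ 2 := by
  suffices ∑ l ∈ Ico a b, ((a : ℝ) + 1) ^ 2 / ((l : ℝ) + 1) ^ 3 ≤
      2 - 2 * ((a : ℝ) + 1) / ((b : ℝ) + 1) from this.trans (sub_le_self _ (by positivity))
  induction b, h using Nat.le_induction with
  | base => simp; field_simp; norm_num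
  | succ b hb ih =>
    rw [sum_Ico_succ_top hb]
    have hab : (a : ℝ) + 1 ≤ b + 1 := by exact_mod_cast Nat.succ_le_succ hb
    have hstep : ((a : ℝ) + 1) ^ 2 / ((b : ℝ) + 1) ^ 3 ≤
        2 * (a + 1) / (b + 1) - 2 * (a + 1) / ((b + 1 : ℕ) + 1) := by
      push_cast
      rw [div_sub_div _ _ (by positivity) (by positivity),
        div_le_div_iff₀ (by positivity) (by positivity)]
      have hmono : ((a : ℝ) + 1) ^ 2 * ((b + 1) * (b + 1 + 1)) ≤
          (a + 1) * (b + 1) * ((b + 1) * (b + 1 + 1)) := by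
        rw [sq]
        gcongr
      have hrest : 0 ≤ ((a : ℝ) + 1) * (b + 1) ^ 2 * b := by positivity
      nlinarith
    linarith

lemma sq_pow_mul_pow_le {m j : ℕ} {α l N : ℝ} (hj : j < 2 * m) (hα : 0 ≤ α)
    (hαl : α ≤ l) (hlN : l ≤ N) :
    (α ^ 2) ^ max (j - m) 1 * l ^ (2 * m - 1 - j) * (N ^ 2) ^ j * l ^ 3 ≤
      α ^ 2 * l ^ j * (N ^ 2) ^ m * (N ^ 2) ^ max (j - m) 1 := by
  have hl := hα.trans hαl
  have hN := hl.trans hlN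
  simp only [← pow_mul]
  rcases lt_or_ge m j with hmj | hjm
  · obtain ⟨e, rfl⟩ := Nat.exists_eq_add_of_lt hmj
    obtain ⟨g, hg⟩ : ∃ g, m = e + g + 2 := ⟨m - e - 2, by omega⟩
    rw [show max (m + e + 1 - m) 1 = e + 1 by omega, show 2 * m - 1 - (m + e + 1) = g by omega]
    calc _ = α ^ 2 * α ^ (2 * e) * l ^ g * l ^ 3 * N ^ (2 * (m + e + 1)) := by ring
      _ ≤ α ^ 2 * l ^ (2 * e) * l ^ g * l ^ 3 * N ^ (2 * (m + e + 1)) := by gcongr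
      _ = _ := by rw [hg]; ring
  · obtain ⟨e, rfl⟩ := Nat.exists_eq_add_of_le hjm
    obtain ⟨g, hg⟩ : ∃ g, j + 2 * e = g + 1 := ⟨j + 2 * e - 1, by omega⟩
    rw [show max (j - (j + e)) 1 = 1 by omega, show 2 * (j + e) - 1 - j = g by omega]
    calc _ = α ^ 2 * l ^ (g + 1) * l ^ 2 * N ^ (2 * j) := by ring
      _ = α ^ 2 * l ^ j * N ^ (2 * j) * l ^ (2 * e + 2) := by rw [← hg]; ring
      _ ≤ α ^ 2 * l ^ j * N ^ (2 * j) * N ^ (2 * e + 2) := by gcongr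
      _ = _ := by ring

lemma regVar_le_mul_gridPt {N n a : ℕ} {C x : ℝ} (hN : 0 < N) (hn : 0 < n) (hC : 0 ≤ C)
    (hNn : (N : ℝ) ^ 2 ≤ C * n) (hx : 0 ≤ x) (hxa : x ≤ gridPt N (a + 1)) :
    regVar n x ≤ (1 + C) * ((a + 1) ^ 2 / N ^ 2) := by
  have hN' : (0 : ℝ) < N := Nat.cast_pos.mpr hN
  have hn' : (0 : ℝ) < n := Nat.cast_pos.mpr hn
  have ha : (1 : ℝ) ≤ (a + 1) ^ 2 := one_le_pow₀ (le_add_of_nonneg_left a.cast_nonneg)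
  have hinv : 1 / (n : ℝ) ≤ C / N ^ 2 := by
    rw [div_le_div_iff₀ hn' (by positivity)]
    linarith
  rw [gridPt, div_pow, Nat.cast_succ] at hxa
  calc regVar n x ≤ x + 1 / n := regVar_le_add n hx
    _ ≤ (a + 1) ^ 2 / N ^ 2 + C * ((a + 1) ^ 2 / N ^ 2) := by
        gcongr
        rw [mul_div_assoc']
        exact hinv.trans (by gcongr; exact le_mul_of_one_le_right hC ha)
    _ = (1 + C) * ((a + 1) ^ 2 / N ^ 2) := by ring

lemma one_div_pow_mul_regVar_pow_le {N n a p m : ℕ} {C x : ℝ} (hN : 0 < N) (hn : 0 < n)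
    (hC : 0 ≤ C) (hNn : (N : ℝ) ^ 2 ≤ C * n) (hx : 0 ≤ x) (hxa : x ≤ gridPt N (a + 1)) :
    (1 / (n : ℝ)) ^ m * regVar n x ^ p ≤
      (1 + C) ^ (m + p) * (((a + 1) ^ 2) ^ p / ((N ^ 2) ^ m * (N ^ 2) ^ p)) := by
  have : (0 : ℝ) < N := Nat.cast_pos.mpr hN
  have hn' : (0 : ℝ) < n := Nat.cast_pos.mpr hn
  have hvar := regVar_le_mul_gridPt hN hn hC hNn hx hxa
  have hvar0 := regVar_nonneg n x
  have hinv : 1 / (n : ℝ) ≤ (1 + C) / N ^ 2 := by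
    rw [div_le_div_iff₀ hn' (by positivity)]
    linarith
  calc (1 / (n : ℝ)) ^ m * regVar n x ^ p
      ≤ ((1 + C) / N ^ 2) ^ m * ((1 + C) * ((a + 1) ^ 2 / N ^ 2)) ^ p := by gcongr
    _ = (1 + C) ^ (m + p) * (((a + 1) ^ 2) ^ p / ((N ^ 2) ^ m * (N ^ 2) ^ p)) := by
        rw [div_pow, mul_pow, div_pow, pow_add]
        ring

namespace GridApprox

lemma exists_abs_eval_gridIndex_half_le (r : ℕ) : ∃ K : ℝ, 0 ≤ K ∧
    ∀ {N : ℕ} {f : ℝ → ℝ} {P : ℕ → ℝ[X]} {F W : ℝ}, GridApprox r N f P F W →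
      ∀ y ∈ Set.Icc (1 / 2 : ℝ) (3 / 4),
        |(P (gridIndex N (1 / 2))).eval y| ≤ K * (F + W * N ^ r) := by
  obtain ⟨K, hK, hsub⟩ := exists_abs_eval_sub_eval_le r
  refine ⟨1 + K, by positivity, fun {N f P F W} H y hy => ?_⟩
  have hF := H.bound_nonneg
  have hW := H.error_nonneg
  have hN := H.one_le_cast
  have := zero_lt_one.trans_le hN
  have hy0 : 0 ≤ y := by linarith [hy.1]
  set c := gridIndex N (1 / 2)
  have hcb : c ≤ gridIndex N y := gridIndex_mono N hy.1
  have hcN : (N : ℝ) ≤ 2 * c + 3 := natCast_le_two_mul_gridIndex_half_add_three H.pos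
  have hb := H.gridPt_gridIndex_le hy0 hy.2
  have hb_le : (gridIndex N y : ℝ) ≤ N :=
    natCast_le_of_gridPt_le_one H.pos (hb.trans (by norm_num))
  have hpoly := hsub H c (gridIndex N y) N y
    (H.gridPt_gridIndex_le (by norm_num) (by norm_num)) hb hN
    (abs_le.mpr ⟨by linarith [(Nat.cast_le (α := ℝ)).mpr hcb],
      by linarith [(c.cast_nonneg : (0 : ℝ) ≤ c)]⟩)
    (fun i hi => by
      rw [min_eq_left hcb, max_eq_right hcb, mem_Ico] at hi
      have hi1 : gridPt N (i + 1) ≤ 3 / 4 := (gridPt_mono N hi.2).trans hb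
      have hci : (c : ℝ) ≤ i := Nat.cast_le.mpr hi.1
      refine (abs_le.mpr ⟨by linarith [hy.1], by linarith [hy.2, gridPt_nonneg N (i + 1)]⟩ :
        |y - gridPt N (i + 1)| ≤ 1).trans ?_
      rw [mul_div_assoc', le_div_iff₀ (by positivity)]
      nlinarith)
  have hlocal := H.abs_sub_eval_gridIndex_le ⟨hy0, hy.2⟩
  have hf := H.abs_apply_le y ⟨hy0, hy.2.trans (by norm_num)⟩
  calc |(P c).eval y|
      = |f y - (f y - (P (gridIndex N y)).eval y) -
          ((P (gridIndex N y)).eval y - (P c).eval y)| := by congr 1; ring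
    _ ≤ F + W + K * W * N ^ r :=
        (abs_sub _ _).trans (add_le_add ((abs_sub _ _).trans (add_le_add hf hlocal)) hpoly)
    _ ≤ F + W * N ^ r + K * W * N ^ r := by
        gcongr
        exact le_mul_of_one_le_right hW (one_le_pow₀ hN)
    _ ≤ (1 + K) * (F + W * N ^ r) := by nlinarith [mul_nonneg hK hF]

lemma exists_abs_hasseDeriv_gridIndex_half_le (r : ℕ) : ∃ K : ℝ, 0 ≤ K ∧
    ∀ {N : ℕ} {f : ℝ → ℝ} {P : ℕ → ℝ[X]} {F W : ℝ}, GridApprox r N f P F W →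
      ∀ x ∈ Set.Icc (0 : ℝ) (1 / 2), ∀ j < r,
        |(hasseDeriv j (P (gridIndex N (1 / 2)))).eval x| ≤ K * (F + W * N ^ r) := by
  obtain ⟨K₁, hK₁, heval⟩ := exists_abs_eval_gridIndex_half_le r
  obtain ⟨K₂, hK₂, hderiv⟩ := exists_abs_eval_hasseDeriv_le (r - 1)
  refine ⟨K₂ * K₁ * (2 ^ r * 4 ^ r), by positivity, fun {N f P F W} H x hx j hj => ?_⟩
  have hF := H.bound_nonneg
  have hW := H.error_nonneg
  have h := hderiv (P (gridIndex N (1 / 2))) (1 / 2) (1 / 4) (K₁ * (F + W * N ^ r)) 2 x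
    (H.natDegree_le _) (by norm_num)
    (fun y hy => heval H y ⟨hy.1, hy.2.trans (by norm_num)⟩) (by norm_num)
    (abs_le.mpr ⟨by linarith [hx.1], by linarith [hx.2]⟩) j
  calc _ ≤ K₂ * (K₁ * (F + W * N ^ r)) * 2 ^ (r - 1 - j) / (1 / 4) ^ j := h
    _ = K₂ * (K₁ * (F + W * N ^ r)) * (2 ^ (r - 1 - j) * 4 ^ j) := by
        rw [one_div, inv_pow, div_inv_eq_mul, mul_assoc]
    _ ≤ K₂ * (K₁ * (F + W * N ^ r)) * (2 ^ r * 4 ^ r) := by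
        gcongr
        · norm_num
        · omega
        · norm_num
    _ = K₂ * K₁ * (2 ^ r * 4 ^ r) * (F + W * N ^ r) := by ring

lemma exists_abs_hasseDeriv_half_mul_weight_le (m : ℕ) {C : ℝ} (hC : 0 ≤ C) : ∃ K : ℝ, 0 ≤ K ∧
    ∀ {N n : ℕ} {f : ℝ → ℝ} {P : ℕ → ℝ[X]} {F W : ℝ}, GridApprox (2 * m) N f P F W →
      (N : ℝ) ^ 2 ≤ C * n → ∀ x ∈ Set.Icc (0 : ℝ) (1 / 2), ∀ j < 2 * m,
        |(hasseDeriv j (P (gridIndex N (1 / 2)))).eval x| *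
          ((1 / (n : ℝ)) ^ m * regVar n x ^ max (j - m) 1) ≤ K * (W + F / n ^ m) := by
  obtain ⟨K, hK, hbulk⟩ := exists_abs_hasseDeriv_gridIndex_half_le (2 * m)
  refine ⟨K * (1 + C ^ m), by positivity, fun {N n f P F W} H hNn x hx j hj => ?_⟩
  have hF := H.bound_nonneg
  have hW := H.error_nonneg
  have hn : (0 : ℝ) < n := Nat.cast_pos.mpr (H.pos_of_sq_le hNn)
  have hvar : regVar n x ^ max (j - m) 1 ≤ 1 :=
    pow_le_one₀ (regVar_nonneg n x) (regVar_le_one n ⟨hx.1, hx.2.trans (by norm_num)⟩)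
  calc _ ≤ K * (F + W * N ^ (2 * m)) * ((1 / (n : ℝ)) ^ m * 1) := by
        have := regVar_nonneg n x
        gcongr
        exact hbulk H x hx j hj
    _ ≤ K * (F + W * (C * n) ^ m) * ((1 / (n : ℝ)) ^ m * 1) := by
        rw [pow_mul]
        gcongr
    _ = K * (C ^ m * W + F / n ^ m) := by
        rw [mul_pow, one_div_pow]
        field_simp
        ring
    _ ≤ K * ((1 + C ^ m) * (W + F / n ^ m)) := by
        gcongr
        nlinarith [(by positivity : 0 ≤ F / (n : ℝ) ^ m),
          (by positivity : 0 ≤ C ^ m * (F / (n : ℝ) ^ m))]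
    _ = K * (1 + C ^ m) * (W + F / n ^ m) := by ring

lemma exists_abs_hasseDeriv_succ_sub_le_of_le (r : ℕ) : ∃ K : ℝ, 0 ≤ K ∧
    ∀ {N : ℕ} {f : ℝ → ℝ} {P : ℕ → ℝ[X]} {F W : ℝ}, GridApprox r N f P F W →
      ∀ l : ℕ, gridPt N (l + 1) ≤ 3 / 4 → ∀ x ∈ Set.Icc 0 (gridPt N (l + 1)), ∀ j : ℕ,
        |(hasseDeriv j (P (l + 1))).eval x - (hasseDeriv j (P l)).eval x| ≤
          K * W * ((l : ℝ) + 1) ^ (r - 1 - j) / ((l + 1) / N ^ 2) ^ j := by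
  obtain ⟨K, hK, hsucc⟩ := exists_abs_hasseDeriv_succ_sub_le r
  refine ⟨K, hK, fun {N f P F W} H l hl x hx j => ?_⟩
  have hW := H.error_nonneg
  have hN := zero_lt_one.trans_le H.one_le_cast
  have hl0 : (0 : ℝ) ≤ l := l.cast_nonneg
  have hxl : |x - gridPt N (l + 1)| ≤ (l + 1) * ((2 * l + 3) / N ^ 2) := by
    rw [abs_of_nonpos (sub_nonpos.mpr hx.2), neg_sub]
    refine (sub_le_self _ hx.1).trans ?_
    rw [gridPt, div_pow, mul_div_assoc', Nat.cast_succ]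
    gcongr
    nlinarith
  refine (hsucc H l (l + 1) x hl (le_add_of_nonneg_left hl0) hxl j).trans ?_
  gcongr
  · exact le_mul_of_one_le_left hl0 (by norm_num)
  · norm_num

lemma exists_abs_hasseDeriv_succ_sub_mul_weight_le (m : ℕ) {C : ℝ} (hC : 0 ≤ C) :
    ∃ K : ℝ, 0 ≤ K ∧
      ∀ {N n : ℕ} {f : ℝ → ℝ} {P : ℕ → ℝ[X]} {F W : ℝ}, GridApprox (2 * m) N f P F W →
        (N : ℝ) ^ 2 ≤ C * n → ∀ a l : ℕ, a ≤ l → gridPt N (l + 1) ≤ 3 / 4 →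
          ∀ x ∈ Set.Icc 0 (gridPt N (a + 1)), ∀ j < 2 * m,
            |(hasseDeriv j (P (l + 1))).eval x - (hasseDeriv j (P l)).eval x| *
              ((1 / (n : ℝ)) ^ m * regVar n x ^ max (j - m) 1) ≤
                K * W * (((a : ℝ) + 1) ^ 2 / ((l : ℝ) + 1) ^ 3) := by
  obtain ⟨K, hK, hsucc⟩ := exists_abs_hasseDeriv_succ_sub_le_of_le (2 * m)
  refine ⟨K * (1 + C) ^ (m + (m + 1)), by positivity,
    fun {N n f P F W} H hNn a l hal hl x hx j hj => ?_⟩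
  have hW := H.error_nonneg
  have hN := zero_lt_one.trans_le H.one_le_cast
  have hal' : (a : ℝ) + 1 ≤ l + 1 := by exact_mod_cast Nat.succ_le_succ hal
  have hlN : (l : ℝ) + 1 ≤ N := by
    exact_mod_cast natCast_le_of_gridPt_le_one H.pos (hl.trans (by norm_num))
  have hvar0 := regVar_nonneg n x
  have hderiv := hsucc H l hl x ⟨hx.1, hx.2.trans (gridPt_mono N (by omega))⟩ j
  have hp : max (j - m) 1 ≤ m + 1 := by omega
  have hweight := one_div_pow_mul_regVar_pow_le (p := max (j - m) 1) (m := m) H.pos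
    (H.pos_of_sq_le hNn) hC hNn hx.1 hx.2
  have hpow := sq_pow_mul_pow_le hj (by positivity : (0 : ℝ) ≤ a + 1) hal' hlN
  set p := max (j - m) 1
  calc _ ≤ K * W * ((l : ℝ) + 1) ^ (2 * m - 1 - j) / ((l + 1) / N ^ 2) ^ j *
        ((1 + C) ^ (m + p) * (((a + 1) ^ 2) ^ p / ((N ^ 2) ^ m * (N ^ 2) ^ p))) := by gcongr
    _ = K * W * (1 + C) ^ (m + p) * ((((a : ℝ) + 1) ^ 2) ^ p * ((l : ℝ) + 1) ^ (2 * m - 1 - j) *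
        ((N : ℝ) ^ 2) ^ j / (((l : ℝ) + 1) ^ j * ((N : ℝ) ^ 2) ^ m * ((N : ℝ) ^ 2) ^ p)) := by
        rw [div_pow]
        field_simp
    _ ≤ K * W * (1 + C) ^ (m + (m + 1)) * (((a : ℝ) + 1) ^ 2 / ((l : ℝ) + 1) ^ 3) := by
        gcongr ?_ * ?_
        · gcongr
          exact le_add_of_nonneg_right hC
        · rw [div_le_div_iff₀ (by positivity) (by positivity)]
          exact hpow.trans_eq (by ring)
    _ = _ := by ring

lemma exists_abs_hasseDeriv_mul_weight_le (m : ℕ) {C : ℝ} (hC : 0 ≤ C) : ∃ K : ℝ, 0 ≤ K ∧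
    ∀ {N n : ℕ} {f : ℝ → ℝ} {P : ℕ → ℝ[X]} {F W : ℝ}, GridApprox (2 * m) N f P F W →
      (N : ℝ) ^ 2 ≤ C * n → ∀ x ∈ Set.Icc (0 : ℝ) (1 / 2), ∀ j < 2 * m,
        |(hasseDeriv j (P (gridIndex N x))).eval x| *
          ((1 / (n : ℝ)) ^ m * regVar n x ^ max (j - m) 1) ≤ K * (W + F / n ^ m) := by
  obtain ⟨K₁, hK₁, hbulk⟩ := exists_abs_hasseDeriv_half_mul_weight_le m hC
  obtain ⟨K₂, hK₂, hsucc⟩ := exists_abs_hasseDeriv_succ_sub_mul_weight_le m hC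
  refine ⟨K₁ + K₂ * 2, by positivity, fun {N n f P F W} H hNn x hx j hj => ?_⟩
  have hF := H.bound_nonneg
  have hW := H.error_nonneg
  have hw : 0 ≤ (1 / (n : ℝ)) ^ m * regVar n x ^ max (j - m) 1 := by
    have := regVar_nonneg n x
    positivity
  have hbulk := hbulk H hNn x hx j hj
  have hac : gridIndex N x ≤ gridIndex N (1 / 2) := gridIndex_mono N hx.2
  have hc : gridPt N (gridIndex N (1 / 2)) ≤ 3 / 4 :=
    H.gridPt_gridIndex_le (by norm_num) (by norm_num)
  have hxa := (H.mem_Icc_gridIndex hx.1).2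
  set w := (1 / (n : ℝ)) ^ m * regVar n x ^ max (j - m) 1
  set a := gridIndex N x
  set c := gridIndex N (1 / 2)
  set T : ℕ → ℝ := fun i => (hasseDeriv j (P i)).eval x
  have htelescope : |T c - T a| ≤ ∑ l ∈ Ico a c, |T (l + 1) - T l| := by
    simpa only [Real.dist_eq, abs_sub_comm] using dist_le_Ico_sum_dist T hac
  calc |T a| * w ≤ (|T c| + ∑ l ∈ Ico a c, |T (l + 1) - T l|) * w := by
        gcongr
        linarith [abs_sub_abs_le_abs_sub (T a) (T c), abs_sub_comm (T a) (T c)]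
    _ = |T c| * w + ∑ l ∈ Ico a c, |T (l + 1) - T l| * w := by rw [add_mul, sum_mul]
    _ ≤ K₁ * (W + F / n ^ m) + ∑ l ∈ Ico a c,
          K₂ * W * (((a : ℝ) + 1) ^ 2 / ((l : ℝ) + 1) ^ 3) := by
        refine add_le_add hbulk (sum_le_sum fun l hl => ?_)
        rw [mem_Ico] at hl
        exact hsucc H hNn a l hl.1 ((gridPt_mono N hl.2).trans hc) x ⟨hx.1, hxa⟩ j hj
    _ ≤ K₁ * (W + F / n ^ m) + K₂ * (W + F / n ^ m) * 2 := by
        rw [← mul_sum]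
        gcongr
        · exact le_add_of_nonneg_right (by positivity)
        · exact sum_Ico_sq_div_cube_le hac
    _ = (K₁ + K₂ * 2) * (W + F / n ^ m) := by ring

lemma exists_abs_bootIter_eval_le {m : ℕ} (hm : m ≠ 0) {C : ℝ} (hC : 0 ≤ C) : ∃ K : ℝ, 0 ≤ K ∧
    ∀ {N n : ℕ} {f : ℝ → ℝ} {P : ℕ → ℝ[X]} {F W : ℝ}, GridApprox (2 * m) N f P F W →
      (N : ℝ) ^ 2 ≤ C * n → ∀ x ∈ Set.Icc (0 : ℝ) (1 / 2),
        |bootIter n (fun y => (P (gridIndex N x)).eval y) m x| ≤ K * (W + F / n ^ m) := by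
  obtain ⟨s, rfl⟩ := Nat.exists_eq_succ_of_ne_zero hm
  obtain ⟨K, hK, hcoeff⟩ := exists_abs_hasseDeriv_mul_weight_le (s + 1) hC
  obtain ⟨A, hA, hboot⟩ := exists_abs_eval_one_sub_bernsteinMap_pow_apply_le s (2 * (s + 1) - 1)
  refine ⟨A * K, by positivity, fun {N n f P F W} H hNn x hx => ?_⟩
  rw [bootIter_eval, mul_assoc]
  exact hboot n (H.pos_of_sq_le hNn) x ⟨hx.1, hx.2.trans (by norm_num)⟩ _ _ (H.natDegree_le _)
    fun j hj => hcoeff H hNn x hx j (by omega)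

lemma exists_abs_bootIter_le {m : ℕ} (hm : m ≠ 0) {C : ℝ} (hC : 0 ≤ C) : ∃ K : ℝ, 0 ≤ K ∧
    ∀ {N n : ℕ} {f : ℝ → ℝ} {P : ℕ → ℝ[X]} {F W : ℝ}, GridApprox (2 * m) N f P F W →
      (N : ℝ) ^ 2 ≤ C * n → ∀ x ∈ Set.Icc (0 : ℝ) (1 / 2),
        |bootIter n f m x| ≤ K * (W + F / n ^ m) := by
  obtain ⟨K₁, hK₁, hrem⟩ := exists_abs_bootIter_sub_eval_le (2 * m) m hC
  obtain ⟨K₂, hK₂, hpoly⟩ := exists_abs_bootIter_eval_le hm hC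
  refine ⟨K₁ + K₂, by positivity, fun {N n f P F W} H hNn x hx => ?_⟩
  have hremx := hrem H hNn x hx
  rw [bootIter_sub] at hremx
  rw [add_mul, ← sub_add_cancel (bootIter n f m x)]
  exact (abs_add_le _ _).trans (add_le_add hremx (hpoly H hNn x hx))

end GridApprox

end BootstrapOfLocalPolynomial

section WeightedDifferences

open Polynomial Finset

/-! ### Weighted differences and the modulus of smoothness -/

/-- The symmetric differences of order `r` of `f` inside `[0, 1]` with centre `u` and step at most
`t √(u (1 - u))` are bounded by `ω`. They are written as forward differences from the left end of
the stencil, with steps of either sign. -/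
def WeightedDiffBdd (r : ℕ) (f : ℝ → ℝ) (t ω : ℝ) : Prop :=
  ∀ u s : ℝ, u - r * s / 2 ∈ Set.Icc (0 : ℝ) 1 → u + r * s / 2 ∈ Set.Icc (0 : ℝ) 1 →
    |s| ≤ t * √(u * (1 - u)) → |(fwdDiff s)^[r] f (u - r * s / 2)| ≤ ω

lemma sq_mul_sq_le_of_le_gridPt_sub {N i : ℕ} {d u : ℝ} (hN : 0 < N) (hd : 0 ≤ d)
    (hwidth : d ≤ gridPt N (i + 2) - gridPt N i) (hlower : gridPt N i + d / 2 ≤ u) :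
    d ^ 2 * N ^ 2 ≤ 16 * u := by
  have hN_sq : (0 : ℝ) < N ^ 2 := by positivity
  set σ := d * N ^ 2 with hσ
  have hσ0 : 0 ≤ σ := by positivity
  have hσ_le : σ ≤ 4 * i + 4 := by
    rw [gridPt_add, add_sub_cancel_left, le_div_iff₀ hN_sq] at hwidth
    push_cast at hwidth
    linarith
  have hσ_sq : σ ^ 2 ≤ 16 * (i ^ 2 + σ / 2) := by
    nlinarith [mul_le_mul_of_nonneg_left hσ_le hσ0, sq_nonneg (σ - 4 * i)]
  have hscale : (i : ℝ) ^ 2 + σ / 2 = (gridPt N i + d / 2) * N ^ 2 := by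
    rw [hσ, gridPt]
    field_simp
  refine le_of_mul_le_mul_right ?_ hN_sq
  calc d ^ 2 * N ^ 2 * N ^ 2 = σ ^ 2 := by rw [hσ]; ring
    _ ≤ 16 * ((gridPt N i + d / 2) * N ^ 2) := hscale ▸ hσ_sq
    _ ≤ 16 * u * N ^ 2 := by rw [← mul_assoc]; gcongr

lemma abs_le_mul_sqrt_of_mem_gridPt {r N i : ℕ} {t u s : ℝ} (hr : r ≠ 0) (hN : 100 ≤ N)
    (ht : 9 ≤ t * N) (hi : gridPt N i ≤ 3 / 4)
    (hleft : u - r * s / 2 ∈ Set.Icc (gridPt N i) (gridPt N (i + 2)))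
    (hright : u + r * s / 2 ∈ Set.Icc (gridPt N i) (gridPt N (i + 2))) :
    |s| ≤ t * √(u * (1 - u)) := by
  have hN0 : 0 < N := by omega
  have ht0 : 0 ≤ t := nonneg_of_mul_nonneg_left (by linarith) (Nat.cast_pos.mpr hN0)
  have hs : |s| ≤ |r * s| := by
    rw [abs_mul, Nat.abs_cast]
    exact le_mul_of_one_le_left (abs_nonneg s) (by exact_mod_cast Nat.one_le_iff_ne_zero.mpr hr)
  have hwidth : |r * s| ≤ gridPt N (i + 2) - gridPt N i := by
    rw [abs_le]
    constructor <;> linarith [hleft.1, hleft.2, hright.1, hright.2]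
  have hlower : gridPt N i + |s| / 2 ≤ u := by
    rcases abs_cases (r * s) with ⟨h, -⟩ | ⟨h, -⟩ <;> linarith [hleft.1, hright.1]
  have hupper : u ≤ 4 / 5 := by linarith [hleft.2, hright.2, gridPt_add_two_le hN hi]
  have hsq := sq_mul_sq_le_of_le_gridPt_sub hN0 (abs_nonneg s) (hs.trans hwidth) hlower
  have hu0 : 0 ≤ u := by linarith [gridPt_nonneg N i, abs_nonneg s]
  have ht_sq : 81 ≤ t ^ 2 * N ^ 2 := by nlinarith
  rw [← Real.sqrt_sq ht0, ← Real.sqrt_mul (sq_nonneg t)]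
  refine Real.le_sqrt_of_sq_le (le_of_mul_le_mul_right (a := (N : ℝ) ^ 2) ?_ (by positivity))
  calc |s| ^ 2 * N ^ 2 ≤ 81 * (u * (1 - u)) := by nlinarith
    _ ≤ t ^ 2 * N ^ 2 * (u * (1 - u)) := by
        gcongr
        exact mul_nonneg hu0 (by linarith)
    _ = t ^ 2 * (u * (1 - u)) * N ^ 2 := by ring

lemma WeightedDiffBdd.fwdDiffBdd {r N i : ℕ} {f : ℝ → ℝ} {t ω : ℝ} (h : WeightedDiffBdd r f t ω)
    (hr : r ≠ 0) (hN : 100 ≤ N) (ht : 9 ≤ t * N) (hi : gridPt N i ≤ 3 / 4) :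
    FwdDiffBdd r f (gridPt N i) (gridPt N (i + 2)) ω := by
  intro v s hv hvs
  have hcell : Set.Icc (gridPt N i) (gridPt N (i + 2)) ⊆ Set.Icc 0 1 :=
    Set.Icc_subset_Icc (gridPt_nonneg N i) ((gridPt_add_two_le hN hi).trans (by norm_num))
  have hleft : v + r * s / 2 - r * s / 2 = v := by ring
  have hright : v + r * s / 2 + r * s / 2 = v + r * s := by ring
  rw [← hleft] at hv ⊢
  rw [← hright] at hvs
  exact h _ _ (hcell hv) (hcell hvs) (abs_le_mul_sqrt_of_mem_gridPt hr hN ht hi hv hvs)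

lemma exists_gridApprox {r : ℕ} (hr : r ≠ 0) : ∃ K : ℝ, 0 ≤ K ∧
    ∀ {N : ℕ} {f : ℝ → ℝ} {F t ω : ℝ}, 100 ≤ N → 9 ≤ t * N → Continuous f →
      (∀ y ∈ Set.Icc (0 : ℝ) 1, |f y| ≤ F) → WeightedDiffBdd r f t ω →
        ∃ P : ℕ → ℝ[X], GridApprox r N f P F (K * ω) := by
  obtain ⟨K, hK, hwhitney⟩ := exists_abs_sub_eval_le_of_fwdDiffBdd hr
  refine ⟨K, hK, fun {N f F t ω} hN ht hf hF hω => ?_⟩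
  have : (0 : ℝ) < N := by exact_mod_cast (by omega : 0 < N)
  have hlocal (i : ℕ) : ∃ P : ℝ[X], P.natDegree < r ∧ (gridPt N i ≤ 3 / 4 →
      ∀ y ∈ Set.Icc (gridPt N i) (gridPt N (i + 2)), |f y - P.eval y| ≤ K * ω) := by
    by_cases hi : gridPt N i ≤ 3 / 4
    · have hlt : gridPt N i < gridPt N (i + 2) := by
        rw [gridPt_add]
        exact lt_add_of_pos_right _ (by positivity)
      obtain ⟨P, hdeg, hP⟩ := hwhitney f _ _ ω hf hlt (hω.fwdDiffBdd hr hN ht hi)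
      exact ⟨P, hdeg, fun _ => hP⟩
    · exact ⟨0, by simpa using Nat.pos_of_ne_zero hr, fun h => absurd h hi⟩
  choose P hdeg hP using hlocal
  exact ⟨P, hN, hdeg, hP, hF⟩

lemma exists_abs_bootIter_le_of_mem_Icc_half {m : ℕ} (hm : m ≠ 0) : ∃ c > 0,
    ∀ {n : ℕ} {f : ℝ → ℝ} {F ω : ℝ}, 0 < n → Continuous f →
      (∀ y ∈ Set.Icc (0 : ℝ) 1, |f y| ≤ F) → WeightedDiffBdd (2 * m) f (1 / √n) ω →
        ∀ x ∈ Set.Icc (0 : ℝ) (1 / 2), |bootIter n f m x| ≤ c * (ω + F / n ^ m) := by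
  obtain ⟨K₁, hK₁, happrox⟩ := exists_gridApprox (r := 2 * m) (by omega)
  obtain ⟨K₂, hK₂, hboot⟩ :=
    GridApprox.exists_abs_bootIter_le hm (C := 40000) (by norm_num)
  refine ⟨K₂ * (K₁ + 1) + 1, by positivity, fun {n f F ω} hn hf hF hω x hx => ?_⟩
  have hω0 : 0 ≤ ω := (abs_nonneg _).trans (hω 0 0 (by simp) (by simp) (by simp))
  set N := 100 * (n.sqrt + 1) with hN
  have hN_sq : (N : ℝ) ^ 2 ≤ 40000 * n := by
    have : 1 ≤ n.sqrt := Nat.sqrt_pos.mpr hn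
    have hsqrt_sq : n.sqrt ^ 2 ≤ n := n.sqrt_le'
    exact_mod_cast (by rw [hN]; nlinarith : N ^ 2 ≤ 40000 * n)
  have hN_step : 9 ≤ 1 / √n * N := by
    have hn0 : 0 < √(n : ℝ) := Real.sqrt_pos.mpr (Nat.cast_pos.mpr hn)
    have hsqrt : √(n : ℝ) ≤ n.sqrt + 1 := Real.real_sqrt_le_nat_sqrt_succ
    rw [one_div_mul_eq_div, le_div_iff₀ hn0, hN]
    push_cast
    linarith
  obtain ⟨P, H⟩ := happrox (by omega : 100 ≤ N) hN_step hf hF hω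
  have hbias : 0 ≤ F / (n : ℝ) ^ m := div_nonneg H.bound_nonneg (by positivity)
  calc |bootIter n f m x| ≤ K₂ * (K₁ * ω + F / n ^ m) := hboot H hN_sq x hx
    _ ≤ K₂ * ((K₁ + 1) * (ω + F / n ^ m)) := by
        gcongr
        nlinarith [mul_nonneg hK₁ hbias]
    _ ≤ (K₂ * (K₁ + 1) + 1) * (ω + F / n ^ m) := by
        rw [← mul_assoc, add_mul _ 1]
        exact le_add_of_nonneg_right (by positivity)

lemma bernstein'_comp_one_sub {n : ℕ} (hn : 0 < n) (f : ℝ → ℝ) (x : ℝ) :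
    bernstein' n (fun y => f (1 - y)) x = bernstein' n f (1 - x) := by
  have hn0 : (n : ℝ) ≠ 0 := by positivity
  unfold bernstein'
  rw [← sum_range_reflect]
  refine sum_congr rfl fun k hk => ?_
  have hkn : k ≤ n := mem_range_succ_iff.mp hk
  have hnode : 1 - ((n : ℝ) - k) / n = k / n := by field_simp; ring
  rw [Nat.add_sub_cancel, Nat.choose_symm hkn, Nat.sub_sub_self hkn, Nat.cast_sub hkn,
    sub_sub_cancel]
  beta_reduce
  rw [hnode]
  ring

lemma bootIter_comp_one_sub {n : ℕ} (hn : 0 < n) (f : ℝ → ℝ) (m : ℕ) :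
    bootIter n (fun y => f (1 - y)) m = fun x => bootIter n f m (1 - x) := by
  induction m with
  | zero => rfl
  | succ m ih =>
    funext x
    simp only [bootIter, ih, bernstein'_comp_one_sub hn]

lemma WeightedDiffBdd.comp_one_sub {r : ℕ} {f : ℝ → ℝ} {t ω : ℝ} (h : WeightedDiffBdd r f t ω) :
    WeightedDiffBdd r (fun y => f (1 - y)) t ω := by
  intro u s hleft hright hs
  have hreflect : (fwdDiff s)^[r] (fun y => f (1 - y)) (u - r * s / 2) =
      (fwdDiff (-s))^[r] f (1 - u - r * -s / 2) := by
    rw [fwdDiff_iter_eq_sum, fwdDiff_iter_eq_sum]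
    exact sum_congr rfl fun k _ => by ring_nf
  rw [hreflect]
  refine h (1 - u) (-s) ⟨?_, ?_⟩ ⟨?_, ?_⟩ ?_
  iterate 4 linarith [hleft.1, hleft.2, hright.1, hright.2]
  rwa [abs_neg, sub_sub_cancel, mul_comm (1 - u)]

lemma exists_abs_bootIter_le_of_weightedDiffBdd {m : ℕ} (hm : m ≠ 0) : ∃ c > 0,
    ∀ {n : ℕ} {f : ℝ → ℝ} {F ω : ℝ}, 0 < n → Continuous f →
      (∀ y ∈ Set.Icc (0 : ℝ) 1, |f y| ≤ F) → WeightedDiffBdd (2 * m) f (1 / √n) ω →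
        ∀ x ∈ Set.Icc (0 : ℝ) 1, |bootIter n f m x| ≤ c * (ω + F / n ^ m) := by
  obtain ⟨c, hc, hhalf⟩ := exists_abs_bootIter_le_of_mem_Icc_half hm
  refine ⟨c, hc, fun {n f F ω} hn hf hF hω x hx => ?_⟩
  rcases le_total x (1 / 2) with hx_half | hx_half
  · exact hhalf hn hf hF hω x ⟨hx.1, hx_half⟩
  · have hreflect := hhalf hn (f := fun y => f (1 - y)) (by fun_prop)
      (fun y hy => hF _ ⟨by linarith [hy.2], by linarith [hy.1]⟩) hω.comp_one_sub (1 - x)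
      ⟨by linarith [hx.2], by linarith⟩
    simpa only [bootIter_comp_one_sub hn, sub_sub_cancel] using hreflect

lemma ditzSymmDiff_eq_fwdDiff_iter {r : ℕ} {s x : ℝ} {f : ℝ → ℝ}
    (hleft : x - r * s / 2 ∈ Set.Icc (0 : ℝ) 1) (hright : x + r * s / 2 ∈ Set.Icc (0 : ℝ) 1) :
    ditzSymmDiff r s f x = (fwdDiff s)^[r] f (x - r * s / 2) := by
  rw [ditzSymmDiff, if_pos ⟨hleft, hright⟩, fwdDiff_iter_eq_sum, ← sum_range_reflect]
  refine sum_congr rfl fun k hk => ?_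
  have hkr : k ≤ r := mem_range_succ_iff.mp hk
  rw [Nat.add_sub_cancel, Nat.choose_symm hkr, Nat.cast_sub hkr]
  ring_nf

lemma abs_fwdDiff_iter_neg (f : ℝ → ℝ) (r : ℕ) (s v : ℝ) :
    |(fwdDiff (-s))^[r] f (v + r * s)| = |(fwdDiff s)^[r] f v| := by
  have hneg : (fwdDiff s)^[r] f v = (-1) ^ r * (fwdDiff (-s))^[r] f (v + r * s) := by
    rw [fwdDiff_iter_eq_sum, fwdDiff_iter_eq_sum, ← sum_range_reflect, mul_sum]
    refine sum_congr rfl fun k hk => ?_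
    have hkr : k ≤ r := mem_range_succ_iff.mp hk
    rw [Nat.add_sub_cancel, Nat.choose_symm hkr, Nat.cast_sub hkr, Nat.sub_sub_self hkr,
      ← mul_assoc, ← mul_assoc, ← pow_add, show r + (r - k) = 2 * (r - k) + k by omega, pow_add,
      pow_mul]
    ring_nf
  rw [hneg, abs_mul, abs_neg_one_pow, one_mul]

lemma add_half_sub_mem_Icc {r k : ℕ} {h x : ℝ} (hh : 0 ≤ h) (hk : k ∈ range (r + 1))
    (hx : x - r * h / 2 ∈ Set.Icc (0 : ℝ) 1 ∧ x + r * h / 2 ∈ Set.Icc (0 : ℝ) 1) :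
    x + r * h / 2 - k * h ∈ Set.Icc (0 : ℝ) 1 := by
  have hkr : (k : ℝ) ≤ r := by exact_mod_cast mem_range_succ_iff.mp hk
  have hkh := mul_le_mul_of_nonneg_right hkr hh
  exact ⟨by linarith [hx.1.1], by linarith [hx.2.2, mul_nonneg k.cast_nonneg hh]⟩

lemma abs_ditzSymmDiff_le {f : ℝ → ℝ} {F : ℝ} (hF : ∀ y ∈ Set.Icc (0 : ℝ) 1, |f y| ≤ F)
    (r : ℕ) {h : ℝ} (hh : 0 ≤ h) (x : ℝ) : |ditzSymmDiff r h f x| ≤ 2 ^ r * F := by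
  unfold ditzSymmDiff
  split_ifs with hx
  · calc _ ≤ ∑ k ∈ range (r + 1), (r.choose k : ℝ) * F := by
          refine (abs_sum_le_sum_abs _ _).trans (sum_le_sum fun k hk => ?_)
          rw [abs_mul, abs_mul, abs_neg_one_pow, one_mul, Nat.abs_cast]
          exact mul_le_mul_of_nonneg_left (hF _ (add_half_sub_mem_Icc hh hk hx)) (Nat.cast_nonneg _)
      _ = 2 ^ r * F := by
          rw [← sum_mul, ← Nat.cast_sum, Nat.sum_range_choose, Nat.cast_pow, Nat.cast_ofNat]
  · have hF0 : 0 ≤ F := (abs_nonneg _).trans (hF 0 (by simp))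
    rw [abs_zero]
    positivity

lemma dtMod_nonneg (r : ℕ) (f : ℝ → ℝ) (t : ℝ) : 0 ≤ dtMod r f t := by
  refine Real.sSup_nonneg ?_
  rintro y ⟨h, x, -, -, -, rfl⟩
  exact abs_nonneg _

lemma abs_ditzSymmDiff_le_dtMod {f : ℝ → ℝ} {F : ℝ} (hF : ∀ y ∈ Set.Icc (0 : ℝ) 1, |f y| ≤ F)
    (r : ℕ) {h x t : ℝ} (hh : 0 < h) (ht : h ≤ t) (hx : x ∈ Set.Icc (0 : ℝ) 1) :
    |ditzSymmDiff r (h * √(x * (1 - x))) f x| ≤ dtMod r f t := by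
  refine le_csSup ⟨2 ^ r * F, ?_⟩ ⟨h, x, hh, ht, hx, rfl⟩
  rintro y ⟨h, x, hh, -, -, rfl⟩
  exact abs_ditzSymmDiff_le hF r (by positivity) _

lemma weightedDiffBdd_dtMod {r : ℕ} (hr : r ≠ 0) {f : ℝ → ℝ} {F : ℝ}
    (hF : ∀ y ∈ Set.Icc (0 : ℝ) 1, |f y| ≤ F) (t : ℝ) :
    WeightedDiffBdd r f t (dtMod r f t) := by
  intro u s hleft hright hs
  wlog hs0 : 0 ≤ s generalizing s
  · have hneg : u - r * -s / 2 = u - r * s / 2 + r * s := by ring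
    have := this (-s) (by convert hright using 1; ring) (by convert hleft using 1; ring)
      (by rwa [abs_neg]) (by linarith)
    rwa [hneg, abs_fwdDiff_iter_neg] at this
  rcases hs0.eq_or_lt with rfl | hpos
  · obtain ⟨q, rfl⟩ := Nat.exists_eq_succ_of_ne_zero hr
    have hzero (v : ℝ) : (fwdDiff (0 : ℝ))^[q.succ] f v = 0 := by
      rw [Function.iterate_succ_apply', fwdDiff, add_zero, sub_self]
    rw [hzero, abs_zero]
    exact dtMod_nonneg _ _ _
  · rw [abs_of_pos hpos] at hs
    have hφ : 0 < √(u * (1 - u)) := by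
      refine (Real.sqrt_nonneg _).lt_of_ne fun h => ?_
      rw [← h, mul_zero] at hs
      exact hs.not_gt hpos
    have hu : u ∈ Set.Icc (0 : ℝ) 1 := by
      have hrs : 0 ≤ r * s := by positivity
      exact ⟨by linarith [hleft.1], by linarith [hright.2]⟩
    have hle := abs_ditzSymmDiff_le_dtMod hF r (div_pos hpos hφ) ((div_le_iff₀ hφ).mpr hs) hu
    rwa [div_mul_cancel₀ _ hφ.ne', ditzSymmDiff_eq_fwdDiff_iter hleft hright] at hle

lemma bootIter_congr (n : ℕ) {f g : ℝ → ℝ} (hfg : Set.EqOn f g (Set.Icc 0 1)) (m : ℕ) :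
    Set.EqOn (bootIter n f m) (bootIter n g m) (Set.Icc 0 1) := by
  induction m with
  | zero => exact hfg
  | succ m ih =>
    intro x hx
    simp only [bootIter, bernstein', ih hx]
    congr 1
    exact sum_congr rfl fun k hk => by rw [ih (natCast_div_mem_Icc hk)]

lemma ditzSymmDiff_congr {f g : ℝ → ℝ} (hfg : Set.EqOn f g (Set.Icc 0 1)) (r : ℕ) {h : ℝ}
    (hh : 0 ≤ h) (x : ℝ) : ditzSymmDiff r h f x = ditzSymmDiff r h g x := by
  unfold ditzSymmDiff
  split_ifs with hx
  · exact sum_congr rfl fun k hk => by rw [hfg (add_half_sub_mem_Icc hh hk hx)]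
  · rfl

lemma dtMod_congr {f g : ℝ → ℝ} (hfg : Set.EqOn f g (Set.Icc 0 1)) (r : ℕ) (t : ℝ) :
    dtMod r f t = dtMod r g t := by
  unfold dtMod
  congr 1
  ext y
  refine exists_congr fun h => exists_congr fun x => and_congr_right fun hh => ?_
  rw [ditzSymmDiff_congr hfg r (by positivity)]

lemma abs_le_supAbsOn {f : ℝ → ℝ} (hf : ContinuousOn f (Set.Icc 0 1)) {y : ℝ}
    (hy : y ∈ Set.Icc (0 : ℝ) 1) : |f y| ≤ supAbsOn f :=
  le_csSup (isCompact_Icc.image_of_continuousOn hf.abs).bddAbove ⟨y, hy, rfl⟩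

end WeightedDifferences

/-- the bootstrap bias after `m−1` rounds satisfies
`‖(I−B_n)^m f‖ ≤ c (ω_φ^{2m}(f,1/√n) + ‖f‖ n^{−m})` for all `f ∈ C[0,1]` and `n ≥ 1`. -/
theorem bootstrap_bias_upper (m : ℕ) (hm : 1 ≤ m) :
    ∃ c > 0, ∀ f : ℝ → ℝ, ContinuousOn f (Set.Icc 0 1) → ∀ n : ℕ, 1 ≤ n →
      supAbsOn (bootIter n f m) ≤
        c * (dtMod (2 * m) f (1 / Real.sqrt n) + supAbsOn f / (n : ℝ) ^ m) := by
  obtain ⟨c, hc, hboot⟩ := exists_abs_bootIter_le_of_weightedDiffBdd (Nat.one_le_iff_ne_zero.mp hm)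
  refine ⟨c, hc, fun f hf n hn => ?_⟩
  obtain ⟨g, hg, hfg⟩ : ∃ g : ℝ → ℝ, Continuous g ∧ Set.EqOn f g (Set.Icc 0 1) :=
    ⟨_, hf.domRestrict.Icc_extend' (h := zero_le_one), fun y hy => by
      simp [Set.IccExtend_of_mem _ _ hy, Set.domRestrict]⟩
  have hbound : ∀ y ∈ Set.Icc (0 : ℝ) 1, |g y| ≤ supAbsOn f := fun y hy =>
    hfg hy ▸ abs_le_supAbsOn hf hy
  have hdiff := weightedDiffBdd_dtMod (r := 2 * m) (by omega) hbound (1 / √n)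
  refine csSup_le ((Set.nonempty_Icc.mpr zero_le_one).image _) ?_
  rintro _ ⟨x, hx, rfl⟩
  simp only [bootIter_congr n hfg m hx, dtMod_congr hfg]
  exact hboot hn hg hbound hdiff x hx
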